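/- For every fixed integer r ≥ 2 there exists a constant c = c(r) > 0 such that the proportion of ordered r-matchings M of size n (among all (rn)!/((r!)^n · n!) ordered r-matchings on [rn]) that contain a pair of twins of size at least c · n^{2/(r+1)} tends to 1 as n → ∞. Equivalently, a uniformly random ordered r-matching of size n asymptotically almost surely satisfies t(M) ≥ c · n^{2/(r+1)}. -/

import Mathlib

/-- A (sub-)matching: a finite set of pairwise disjoint `r`-element subsets
("edges") of the linearly ordered vertex set `ℕ`. -/
def IsMatching (r : ℕ) (M : Finset (Finset ℕ)) : Prop :=
  (∀ e ∈ M, e.card = r) ∧ ∀ e ∈ M, ∀ f ∈ M, e ≠ f → Disjoint e f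

/-- The vertex support of a matching: the union of its edges. -/
def mSupport (M : Finset (Finset ℕ)) : Finset ℕ := M.sup id

/-- An ordered `r`-matching of size `n`: `n` pairwise disjoint `r`-element edges
partitioning `[rn] = {1, …, rn}`. -/
def IsOrderedMatching (r n : ℕ) (M : Finset (Finset ℕ)) : Prop :=
  IsMatching r M ∧ M.card = n ∧ mSupport M = Finset.Icc 1 (r * n)

/-- Two ordered matchings are isomorphic if some (equivalently, the unique)
order-preserving bijection between their vertex supports maps edges onto edges. -/
def MatchIso (M N : Finset (Finset ℕ)) : Prop :=
  ∃ f : ℕ → ℕ, Set.BijOn f (mSupport M : Set ℕ) (mSupport N : Set ℕ) ∧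
    (∀ x ∈ mSupport M, ∀ y ∈ mSupport M, x < y → f x < f y) ∧
    N = M.image fun e => e.image f

/-- `M` contains twins of size `k`: a pair of vertex-disjoint isomorphic
sub-matchings of `M`, each with `k` edges. -/
def HasTwins (M : Finset (Finset ℕ)) (k : ℕ) : Prop :=
  ∃ M₁ M₂ : Finset (Finset ℕ), M₁ ⊆ M ∧ M₂ ⊆ M ∧
    Disjoint (mSupport M₁) (mSupport M₂) ∧ MatchIso M₁ M₂ ∧
    M₁.card = k ∧ M₂.card = k

/-- `t(M)`: the maximum size of twins in `M`. -/
noncomputable def twinMax (M : Finset (Finset ℕ)) : ℕ := sSup {k | HasTwins M k}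

/-- `t^(r)(n)`: the minimum of `t(M)` over all ordered `r`-matchings of size `n`. -/
noncomputable def minTwins (r n : ℕ) : ℕ :=
  sInf {t | ∃ M, IsOrderedMatching r n M ∧ twinMax M = t}

/-- A permutation `π` of `[n]` has twins of length `k`: two order-isomorphic
subsequences occupying disjoint sets of positions. -/
def PermTwins {n : ℕ} (π : Equiv.Perm (Fin n)) (k : ℕ) : Prop :=
  ∃ a b : Fin k → Fin n, StrictMono a ∧ StrictMono b ∧
    (∀ i j, a i ≠ b j) ∧ ∀ i j, (π (a i) < π (a j) ↔ π (b i) < π (b j))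

/-- `τ(n)`: the largest `k` such that every permutation of `[n]` has twins of length `k`. -/
noncomputable def permTau (n : ℕ) : ℕ :=
  sSup {k | ∀ π : Equiv.Perm (Fin n), PermTwins π k}

/-- An `r`-pattern, represented by its canonical representative: an ordered
`r`-matching of size `2` (on the vertex set `[2r]`). Every isomorphism class of
ordered `r`-matchings of size `2` contains exactly one such representative. -/
def IsPattern (r : ℕ) (P : Finset (Finset ℕ)) : Prop := IsOrderedMatching r 2 P

/-- A `P`-clique: a matching all of whose pairs of (distinct) edges form the pattern `P`. -/
def IsPClique (P M : Finset (Finset ℕ)) : Prop :=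
  ∀ e ∈ M, ∀ f ∈ M, e ≠ f → MatchIso {e, f} P

/-- `L(M)`: the size of the largest sub-matching of `M` that is a `P`-clique,
over all `r`-patterns `P`. -/
noncomputable def cliqueMax (r : ℕ) (M : Finset (Finset ℕ)) : ℕ :=
  sSup {k | ∃ P, IsPattern r P ∧ ∃ M' ⊆ M, IsPClique P M' ∧ M'.card = k}

/-- `L_r(n)`: the minimum of `L(M)` over all ordered `r`-matchings of size `n`. -/
noncomputable def minClique (r n : ℕ) : ℕ :=
  sInf {l | ∃ M, IsOrderedMatching r n M ∧ cliqueMax r M = l}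


section Helpers
open Equiv Finset

theorem dec_mul_swap {N : ℕ} (p : Fin (N+1)) (e : Perm (Fin N)) (i j : Fin N) :
    Perm.decomposeFin.symm (p, e * swap i j) = Perm.decomposeFin.symm (p, e) * swap i.succ j.succ := by
  ext x
  congr 1
  refine Fin.cases ?_ (fun x => ?_) x
  · rw [Perm.mul_apply, swap_apply_of_ne_of_ne (Fin.succ_ne_zero i).symm (Fin.succ_ne_zero j).symm]
    simp
  · rw [Perm.mul_apply, ← (Fin.succ_injective N).map_swap]
    simp

theorem sum_sq_diff {ι : Type*} [Fintype ι] (G : ι → ℝ) :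
    ∑ p, ∑ q, (G p - G q)^2 = 2 * (Fintype.card ι * ∑ p, G p ^2 - (∑ p, G p)^2) := by
  have : ∀ p q, (G p - G q)^2 = G p ^2 + G q ^ 2 - 2 * (G p * G q) := by intros; ring
  simp_rw [this, sum_sub_distrib, sum_add_distrib, ← mul_sum, ← sum_mul]
  simp [Finset.card_univ]
  rw [← mul_sum]
  ring

theorem dec_sum {N : ℕ} (f : Perm (Fin (N+1)) → ℝ) :
    ∑ σ, f σ = ∑ p, ∑ e, f (Perm.decomposeFin.symm (p, e)) := by
  rw [← Fintype.sum_prod_type', ← Equiv.sum_comp Perm.decomposeFin.symm]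

theorem dec_fiber {N : ℕ} (f : Perm (Fin (N+1)) → ℝ) (p : Fin (N+1)) :
    ∑ e, f (Perm.decomposeFin.symm (p, e)) = ∑ σ ∈ univ.filter (fun σ : Perm (Fin (N+1)) => σ 0 = p), f σ := by
  rw [sum_filter, dec_sum]
  simp

theorem fiber_card {N : ℕ} (p : Fin (N+1)) :
    (univ.filter (fun σ : Perm (Fin (N+1)) => σ 0 = p)).card = N.factorial := by
  have := dec_fiber (fun _ => 1) p
  simp [Fintype.card_perm] at this
  exact_mod_cast this.symm

theorem fiber_shift {N : ℕ} (f : Perm (Fin (N+1)) → ℝ) (p q : Fin (N+1)) :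
    ∑ σ ∈ univ.filter (fun σ : Perm (Fin (N+1)) => σ 0 = q), f σ
    = ∑ σ ∈ univ.filter (fun σ : Perm (Fin (N+1)) => σ 0 = p), f (swap p q * σ) := by
  symm
  apply sum_bij (fun σ _ => swap p q * σ)
  · intro σ h; simp at h ⊢; simp [h]
  · intro a _ b _ h; simpa using h
  · intro b hb
    refine ⟨swap p q * b, ?_, ?_⟩
    · simp at hb ⊢; simp [hb]
    · simp [← mul_assoc]
  · intros; rfl

theorem step_bound {N : ℕ} (f : Perm (Fin (N+1)) → ℝ) :
    ∑ p, ∑ q, ((∑ e, f (Perm.decomposeFin.symm (p, e))) - (∑ e, f (Perm.decomposeFin.symm (q, e))))^2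
    ≤ N.factorial * ∑ j, ∑ σ, (f σ - f (σ * swap 0 j))^2 := by
  have h1 : ∀ p q, ((∑ e, f (Perm.decomposeFin.symm (p, e))) - (∑ e, f (Perm.decomposeFin.symm (q, e))))^2
      ≤ N.factorial * ∑ σ ∈ univ.filter (fun σ : Perm (Fin (N+1)) => σ 0 = p), (f σ - f (swap p q * σ))^2 := by
    intro p q
    rw [dec_fiber, dec_fiber, fiber_shift f p q, ← sum_sub_distrib, ← fiber_card p]
    exact sq_sum_le_card_mul_sum_sq
  calc _ ≤ ∑ p, ∑ q, N.factorial * ∑ σ ∈ univ.filter (fun σ : Perm (Fin (N+1)) => σ 0 = p), (f σ - f (swap p q * σ))^2 :=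
        sum_le_sum fun p _ => sum_le_sum fun q _ => h1 p q
    _ = N.factorial * ∑ p, ∑ σ ∈ univ.filter (fun σ : Perm (Fin (N+1)) => σ 0 = p), ∑ q, (f σ - f (swap (σ 0) q * σ))^2 := by
        rw [mul_sum]
        refine sum_congr rfl fun p _ => ?_
        rw [← mul_sum, sum_comm]
        congr 1
        refine sum_congr rfl fun σ hσ => ?_
        simp at hσ
        simp [hσ]
    _ = N.factorial * ∑ σ : Perm (Fin (N+1)), ∑ q, (f σ - f (swap (σ 0) q * σ))^2 := by
        congr 1
        exact sum_fiberwise univ (fun σ : Perm (Fin (N+1)) => σ 0) _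
    _ = _ := by
        rw [sum_comm (s := univ (α := Fin (N+1)))]
        congr 1
        refine sum_congr rfl fun σ _ => ?_
        rw [← Equiv.sum_comp σ]
        refine sum_congr rfl fun j _ => ?_
        rw [← Equiv.mul_swap_eq_swap_mul]

theorem poincare (N : ℕ) (f : Perm (Fin N) → ℝ) :
    N.factorial * ∑ σ, f σ ^ 2 - (∑ σ, f σ)^2 ≤
      N.factorial * ∑ i : Fin N, ∑ j : Fin N, (if i < j then 1 / (2 * ((N:ℝ) - i)) else 0) *
        ∑ σ, (f σ - f (σ * swap i j))^2 := by
  induction N with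
  | zero => simp
  | succ N ih =>
    set g : Fin (N+1) → Perm (Fin N) → ℝ := fun p e => f (Perm.decomposeFin.symm (p, e)) with hg
    have h1 : ∀ p, _ := fun p => ih (g p)
    have h2 := step_bound f
    rw [sum_sq_diff] at h2
    have h3 := sum_le_sum (s := univ) fun p _ => h1 p
    rw [sum_sub_distrib, ← mul_sum, ← mul_sum] at h3
    rw [Fin.sum_univ_succ (n := N), dec_sum, dec_sum f]
    have e1 : ∑ j : Fin (N+1), (if (0:Fin (N+1)) < j then 1 / (2 * (((N+1:ℕ):ℝ) - (0:Fin (N+1)))) else 0) *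
        ∑ σ, (f σ - f (σ * swap 0 j))^2 = 1 / (2 * ((N:ℝ)+1)) * ∑ j, ∑ σ, (f σ - f (σ * swap 0 j))^2 := by
      rw [mul_sum]
      refine sum_congr rfl fun j _ => ?_
      by_cases hj : 0 < j
      · simp [hj]
      · have : j = 0 := by simpa using hj
        subst this
        simp [← Perm.one_def]
    have e2 : ∑ i : Fin N, ∑ j : Fin (N+1), (if i.succ < j then 1 / (2 * (((N+1:ℕ):ℝ) - (i.succ : Fin (N+1)))) else 0) *
        ∑ σ, (f σ - f (σ * swap i.succ j))^2
        = ∑ p, ∑ i : Fin N, ∑ j : Fin N, (if i < j then 1 / (2 * ((N:ℝ) - i)) else 0) *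
        ∑ σ, (g p σ - g p (σ * swap i j))^2 := by
      symm
      rw [sum_comm]
      refine sum_congr rfl fun i _ => ?_
      rw [sum_comm]
      symm
      rw [Fin.sum_univ_succ]
      simp only [Fin.succ_lt_succ_iff, Fin.not_lt_zero, if_false, zero_mul, zero_add]
      refine sum_congr rfl fun j _ => ?_
      rw [dec_sum, ← mul_sum]
      congr 1
      · simp
      · simp [hg, dec_mul_swap]
    rw [e1, e2]
    simp only [Fintype.card_fin, Nat.factorial_succ] at *
    push_cast at *
    have hN : (0:ℝ) < N + 1 := by positivity
    have h4 := mul_le_mul_of_nonneg_left h3 hN.le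
    have e3 : ((N:ℝ)+1) * N.factorial * (1 / (2 * ((N:ℝ)+1)) * ∑ j, ∑ σ, (f σ - f (σ * swap 0 j))^2)
       = N.factorial * (∑ j, ∑ σ, (f σ - f (σ * swap 0 j))^2) / 2 := by
      field_simp
    rw [mul_add, e3]
    simp only [hg] at *
    linarith

theorem pos_part_bound {N : ℕ} (f : Perm (Fin N) → ℝ) (t : Perm (Fin N) → Fin N → ℝ)
    (ht0 : ∀ σ p, 0 ≤ t σ p) (ht1 : ∀ σ p, t σ p ≤ 1)
    (hf : ∀ σ p q, f σ - f (σ * swap p q) ≤ t σ p + t σ q) (p q : Fin N) :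
    ∑ σ, (f σ - f (σ * swap p q))^2 ≤ 4 * ∑ σ, (t σ p + t σ q) := by
  have key : ∀ σ, (f σ - f (σ * swap p q))^2 ≤
      2 * (t σ p + t σ q) + 2 * (t (σ * swap p q) p + t (σ * swap p q) q) := by
    intro σ
    have h1 := hf σ p q
    have h2 := hf (σ * swap p q) p q
    rw [mul_assoc, swap_mul_self, mul_one] at h2
    have a1 := ht0 σ p
    have a2 := ht0 σ q
    have a3 := ht0 (σ * swap p q) p
    have a4 := ht0 (σ * swap p q) q
    have b1 := ht1 σ p
    have b2 := ht1 σ q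
    have b3 := ht1 (σ * swap p q) p
    have b4 := ht1 (σ * swap p q) q
    rcases le_total 0 (f σ - f (σ * swap p q)) with h | h
    · nlinarith
    · nlinarith
  calc _ ≤ ∑ σ, (2 * (t σ p + t σ q) + 2 * (t (σ * swap p q) p + t (σ * swap p q) q)) :=
        sum_le_sum fun σ _ => key σ
    _ = _ := by
        rw [sum_add_distrib, ← mul_sum, ← mul_sum]
        have := Equiv.sum_comp (Equiv.mulRight (swap p q)) (fun σ => t σ p + t σ q)
        simp only [Equiv.coe_mulRight] at this
        rw [this]; ring

theorem sum_inv_eq (N : ℕ) : ∑ i : Fin N, 1 / ((N:ℝ) - i) = (harmonic N : ℝ) := by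
  rw [Fin.sum_univ_eq_sum_range (fun i => 1 / ((N:ℝ) - i)), harmonic, ← Finset.sum_range_reflect]
  push_cast
  refine sum_congr rfl fun i hi => ?_
  have : i < N := by simpa using hi
  rw [one_div, Nat.cast_sub (by omega), Nat.cast_sub (by omega)]
  congr 1
  push_cast; ring

theorem var_bound {N : ℕ} (f : Perm (Fin N) → ℝ) (t : Perm (Fin N) → Fin N → ℝ)
    (ht0 : ∀ σ p, 0 ≤ t σ p) (ht1 : ∀ σ p, t σ p ≤ 1)
    (hf : ∀ σ p q, f σ - f (σ * swap p q) ≤ t σ p + t σ q) :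
    N.factorial * ∑ σ, f σ ^ 2 - (∑ σ, f σ)^2 ≤
      N.factorial * (2 * (2 + Real.log N) * ∑ σ, ∑ p, t σ p) := by
  refine (poincare N f).trans ?_
  refine mul_le_mul_of_nonneg_left ?_ (by positivity)
  set T : Fin N → ℝ := fun p => ∑ σ, t σ p with hT
  have hT0 : ∀ p, 0 ≤ T p := fun p => sum_nonneg fun σ _ => ht0 σ p
  have hpos : ∀ i : Fin N, (0:ℝ) < (N:ℝ) - i := fun i => by
    have : ((i:ℕ):ℝ) < N := by exact_mod_cast i.2
    linarith
  have h1 : ∀ i j : Fin N, (if i < j then 1 / (2 * ((N:ℝ) - i)) else 0) *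
        ∑ σ, (f σ - f (σ * swap i j))^2 ≤
        (if i < j then 2 / ((N:ℝ) - i) * T i else 0) + 2 * (1 / ((N:ℝ) - i)) * T j := by
    intro i j
    have hp := hpos i
    have hb := pos_part_bound f t ht0 ht1 hf i j
    rw [sum_add_distrib] at hb
    split_ifs with h
    · calc _ ≤ 1 / (2 * ((N:ℝ) - i)) * (4 * (T i + T j)) := mul_le_mul_of_nonneg_left hb (by positivity)
        _ = _ := by field_simp; ring
    · have := hT0 j
      rw [zero_mul, zero_add]
      positivity
  have h2 : ∀ i : Fin N, ∑ j : Fin N, (if i < j then 2 / ((N:ℝ) - i) * T i else 0) ≤ 2 * T i := by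
    intro i
    rw [← sum_filter, sum_const, nsmul_eq_mul]
    have hc : (univ.filter (fun j => i < j)).card = N - 1 - i := by
      rw [show univ.filter (fun j => i < j) = Finset.Ioi i by ext; simp, Fin.card_Ioi]
    rw [hc]
    have hp := hpos i
    have : ((N - 1 - i : ℕ) : ℝ) ≤ (N:ℝ) - i := by
      have := i.2
      rw [← Nat.cast_sub i.2.le]
      exact_mod_cast (by omega)
    calc _ ≤ ((N:ℝ) - i) * (2 / ((N:ℝ) - i) * T i) :=
          mul_le_mul_of_nonneg_right this (mul_nonneg (by positivity) (hT0 i))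
      _ = _ := by field_simp
  calc _ ≤ ∑ i : Fin N, ∑ j : Fin N, ((if i < j then 2 / ((N:ℝ) - i) * T i else 0) + 2 * (1 / ((N:ℝ) - i)) * T j) :=
        sum_le_sum fun i _ => sum_le_sum fun j _ => h1 i j
    _ ≤ ∑ i : Fin N, (2 * T i + 2 * (1 / ((N:ℝ) - i)) * ∑ j, T j) := by
        refine sum_le_sum fun i _ => ?_
        rw [sum_add_distrib, ← mul_sum]
        linarith [h2 i]
    _ = 2 * (1 + harmonic N) * ∑ j, T j := by
        rw [sum_add_distrib, ← mul_sum, ← sum_mul, ← mul_sum, sum_inv_eq]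
        ring
    _ ≤ 2 * (2 + Real.log N) * ∑ j, T j := by
        have := harmonic_le_one_add_log N
        have h0 : 0 ≤ ∑ j, T j := sum_nonneg fun j _ => hT0 j
        gcongr ?_ * _
        linarith
    _ = _ := by rw [hT, sum_comm]

open Classical in
theorem unif_fiber {A B : Type*} [Fintype A] [Fintype B] (g : A → B)
    (h : ∀ b b', ∃ π : A → A, Function.Injective π ∧ ∀ a, g a = b → g (π a) = b') (P : B → Prop) :
    (univ.filter (fun a => P (g a))).card * Fintype.card B
      = Fintype.card A * (univ.filter P).card := by
  have hle : ∀ b b', (univ.filter (fun a => g a = b)).card ≤ (univ.filter (fun a => g a = b')).card := by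
    intro b b'
    obtain ⟨π, hi, hπ⟩ := h b b'
    refine card_le_card_of_injOn π ?_ hi.injOn
    intro a ha
    simp at ha ⊢
    exact hπ a ha
  rcases isEmpty_or_nonempty B with hB | ⟨⟨b0⟩⟩
  · have : IsEmpty A := ⟨fun a => hB.elim (g a)⟩
    simp
  · set K := (univ.filter (fun a => g a = b0)).card with hK
    have hf : ∀ b, (univ.filter (fun a => g a = b)).card = K := fun b => le_antisymm (hle _ _) (hle _ _)
    have gen : ∀ Q : B → Prop, (univ.filter (fun a => Q (g a))).card = (univ.filter Q).card * K := by
      intro Q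
      rw [card_eq_sum_card_fiberwise (f := g) (t := univ.filter Q) (by intro a ha; simpa using ha)]
      rw [sum_const_nat]
      intro b hb
      rw [← hf b]
      congr 1
      ext a
      simp at hb ⊢
      rintro rfl; exact hb
    have h1 := gen P
    have h2 := gen (fun _ => True)
    simp [card_univ] at h2
    rw [h1, h2]; ring

open Classical in
theorem emb_count {ι α : Type*} [Fintype ι] [Fintype α] (p : ι ↪ α) (P : (ι ↪ α) → Prop) :
    (univ.filter (fun σ : Perm α => P (p.trans σ.toEmbedding))).card *
      (Fintype.card α).descFactorial (Fintype.card ι)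
      = (Fintype.card α).factorial * (univ.filter P).card := by
  have := unif_fiber (fun σ : Perm α => p.trans σ.toEmbedding) (fun b b' => by
    obtain ⟨τ, hτ⟩ := Perm.exists_smul_eq_embedding b b'
    refine ⟨fun σ => τ * σ, mul_right_injective τ, ?_⟩
    rintro a rfl
    rw [← hτ]
    ext i
    simp) P
  rwa [Fintype.card_embedding_eq, Fintype.card_perm] at this

open Classical in
theorem root_bound {ι : Type*} [Fintype ι] {N L : ℕ} (hL : 0 < L) (p : ι ↪ Fin N) (ρ : ι → ι)
    (hρ : ∀ a, ρ (ρ a) = ρ a) (d : ℕ) (hd : (univ.filter (fun a => ρ a ≠ a)).card = d) :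
    (univ.filter (fun σ : Perm (Fin N) => ∀ a, (σ (p a)).val / L = (σ (p (ρ a))).val / L)).card *
      N.descFactorial (Fintype.card ι) ≤ N.factorial * (N ^ (Fintype.card ι - d) * L ^ d) := by
  have h := emb_count p (fun φ => ∀ a, (φ a).val / L = (φ (ρ a)).val / L)
  simp only [Fintype.card_fin] at h
  have e : (univ.filter (fun σ : Perm (Fin N) => ∀ a, (σ (p a)).val / L = (σ (p (ρ a))).val / L)).card * N.descFactorial (Fintype.card ι) =
      N.factorial * (univ.filter (fun φ : ι ↪ Fin N => ∀ a, (φ a).val / L = (φ (ρ a)).val / L)).card := by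
    convert h <;> rfl
  rw [e]
  refine Nat.mul_le_mul_left _ ?_
  have hF : Fintype.card {a // ¬ ρ a ≠ a} = Fintype.card ι - d := by
    rw [Fintype.card_subtype_compl, Fintype.card_subtype, hd]
  have hF' : Fintype.card {a // ρ a ≠ a} = d := by rw [Fintype.card_subtype, hd]
  have hc : N ^ (Fintype.card ι - d) * L ^ d =
      (univ : Finset (({a // ¬ ρ a ≠ a} → Fin N) × ({a // ρ a ≠ a} → Fin L))).card := by
    rw [card_univ, Fintype.card_prod, Fintype.card_fun, Fintype.card_fun, hF, hF', Fintype.card_fin, Fintype.card_fin]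
  rw [hc]
  refine card_le_card_of_injOn (fun φ => (fun a => φ a.1, fun a => ⟨(φ a.1).val % L, Nat.mod_lt _ hL⟩)) (by intro a _; simp) ?_
  intro φ hφ ψ hψ he
  simp only [coe_filter, mem_univ, true_and, Set.mem_ofPred_eq] at hφ hψ
  simp only [Prod.mk.injEq] at he
  obtain ⟨h1, h2⟩ := he
  have g1 : ∀ a, ρ a = a → φ a = ψ a := fun a ha => congrFun h1 ⟨a, by simpa using ha⟩
  ext a
  by_cases ha : ρ a = a
  · rw [g1 a ha]
  · have g2 := congrFun h2 ⟨a, ha⟩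
    simp only [Fin.mk.injEq] at g2
    have g3 : (φ a).val / L = (ψ a).val / L := by
      rw [hφ a, hψ a, g1 _ (hρ a)]
    rw [← Nat.div_add_mod (φ a).val L, ← Nat.div_add_mod (ψ a).val L, g2, g3]

/-- block of coordinate `i` of edge `j` -/
def B {n r : ℕ} (L : ℕ) (σ : Perm (Fin (n * r))) (j : Fin n) (i : Fin r) : ℕ :=
  (σ (finProdFinEquiv (j, i))).val / L

/-- two edges have the same blocks coordinatewise, blocks distinct -/
def Epair {n r : ℕ} (L : ℕ) (σ : Perm (Fin (n * r))) (j j' : Fin n) : Prop :=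
  (∀ i, B L σ j i = B L σ j' i) ∧ Function.Injective (B L σ j)

/-- positions of a tuple of distinct edges -/
def posEmb {n r c : ℕ} (u : Fin c ↪ Fin n) : Fin c × Fin r ↪ Fin (n * r) :=
  (u.prodMap (Function.Embedding.refl _)).trans finProdFinEquiv.toEmbedding

theorem posEmb_apply {n r c : ℕ} (u : Fin c ↪ Fin n) (a : Fin c) (i : Fin r) :
    posEmb u (a, i) = finProdFinEquiv (u a, i) := rfl

open Classical in
theorem three_bound {n r L : ℕ} (hL : 0 < L) (u : Fin 3 ↪ Fin n) :
    (univ.filter (fun σ : Perm (Fin (n * r)) => ∀ i, B L σ (u 1) i = B L σ (u 0) i ∧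
      B L σ (u 2) i = B L σ (u 0) i)).card * (n*r).descFactorial (3 * r)
      ≤ (n*r).factorial * ((n*r) ^ r * L ^ (2*r)) := by
  have h := root_bound hL (posEmb u (r := r)) (fun a => (0, a.2)) (by simp) (2 * r) (by
    have : (univ.filter (fun a : Fin 3 × Fin r => ((0:Fin 3), a.2) ≠ a)) = ({1,2} : Finset (Fin 3)) ×ˢ univ := by
      ext ⟨a, i⟩
      simp
      fin_cases a <;> simp
    have h2 := congrArg card this
    rw [card_product] at h2
    convert h2 using 1
    · congr!
    · simp)
  rw [Fintype.card_prod, Fintype.card_fin, Fintype.card_fin, show 3 * r - 2 * r = r by omega] at h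
  refine le_trans (Nat.mul_le_mul_right _ (card_le_card ?_)) h
  intro σ hσ
  simp only [mem_filter, mem_univ, true_and, Prod.forall, posEmb_apply] at hσ ⊢
  intro a i
  fin_cases a
  · rfl
  · exact (hσ i).1
  · exact (hσ i).2

open Classical in
theorem four_bound {n r L : ℕ} (hL : 0 < L) (u : Fin 4 ↪ Fin n) (x y : Fin r) :
    (univ.filter (fun σ : Perm (Fin (n * r)) => (∀ i, B L σ (u 1) i = B L σ (u 0) i ∧
      B L σ (u 3) i = B L σ (u 2) i) ∧ B L σ (u 2) y = B L σ (u 0) x)).card * (n*r).descFactorial (4 * r)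
      ≤ (n*r).factorial * ((n*r) ^ (2*r-1) * L ^ (2*r+1)) := by
  have h := root_bound hL (posEmb u (r := r))
    (fun a => if a.1 = 0 ∨ a.1 = 1 then (0, a.2) else if a.2 = y then (0, x) else (2, a.2)) (by
      rintro ⟨a, i⟩
      fin_cases a <;> simp <;> split_ifs <;> simp_all) (2 * r + 1) (by
    have : (univ.filter (fun a : Fin 4 × Fin r => (if a.1 = 0 ∨ a.1 = 1 then ((0: Fin 4), a.2) else if a.2 = y then (0, x) else (2, a.2)) ≠ a)) = insert (2, y) (({1,3} : Finset (Fin 4)) ×ˢ univ) := by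
      ext ⟨a, i⟩
      by_cases h : i = y <;> fin_cases a <;> simp [h]
    have h2 := congrArg card this
    rw [card_insert_of_notMem (by simp), card_product] at h2
    convert h2 using 1
    · congr!
    · simp)
  rw [Fintype.card_prod, Fintype.card_fin, Fintype.card_fin, show 4 * r - (2 * r + 1) = 2 * r - 1 by omega] at h
  refine le_trans (Nat.mul_le_mul_right _ (card_le_card ?_)) h
  intro σ hσ
  simp only [mem_filter, mem_univ, true_and, Prod.forall, posEmb_apply] at hσ ⊢
  obtain ⟨h1, h2⟩ := hσ
  intro a i
  fin_cases a
  · rfl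
  · exact (h1 i).1
  · by_cases hi : i = y
    · subst hi; simpa [posEmb_apply, B] using h2
    · simp [hi, posEmb_apply]
  · by_cases hi : i = y
    · subst hi; simpa [posEmb_apply, B] using ((h1 i).2.trans h2)
    · simpa [hi, posEmb_apply, B] using (h1 i).2

open Classical in
theorem pair_lower {n r L : ℕ} (hL : 0 < L) (u : Fin 2 ↪ Fin n) :
    (n*r).factorial * ((n*r/L).descFactorial r * (L.descFactorial 2) ^ r) ≤
    (univ.filter (fun σ : Perm (Fin (n * r)) => Epair L σ (u 0) (u 1))).card * (n*r).descFactorial (2 * r) := by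
  have h := emb_count (posEmb u (r := r)) (fun φ => (∀ i, (φ (0, i)).val / L = (φ (1, i)).val / L) ∧
    Function.Injective (fun i => (φ (0, i)).val / L))
  simp only [Fintype.card_prod, Fintype.card_fin] at h
  have e : (univ.filter (fun σ : Perm (Fin (n * r)) => Epair L σ (u 0) (u 1))).card * (n*r).descFactorial (2 * r) =
      (n*r).factorial * (univ.filter (fun φ : Fin 2 × Fin r ↪ Fin (n*r) => (∀ i, (φ (0, i)).val / L = (φ (1, i)).val / L) ∧
    Function.Injective (fun i => (φ (0, i)).val / L))).card := by
    convert h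
    exact Iff.rfl
  rw [e]
  refine Nat.mul_le_mul_left _ ?_
  have hc : (n*r/L).descFactorial r * (L.descFactorial 2) ^ r =
      (univ : Finset ((Fin r ↪ Fin (n*r/L)) × (Fin r → (Fin 2 ↪ Fin L)))).card := by
    rw [card_univ, Fintype.card_prod, Fintype.card_fun, Fintype.card_embedding_eq, Fintype.card_embedding_eq]
    simp only [Fintype.card_fin]
  rw [hc]
  have hlt : ∀ (b : Fin (n*r/L)) (v : Fin L), b.val * L + v.val < n * r := by
    intro b v
    have h1 := b.2
    have h2 := v.2
    have h3 : (b.val + 1) * L ≤ n * r := le_trans (Nat.mul_le_mul_right L h1) (Nat.div_mul_le_self _ _)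
    nlinarith
  have hdiv : ∀ (b : Fin (n*r/L)) (v : Fin L), (b.val * L + v.val) / L = b.val := by
    intro b v
    rw [mul_comm, Nat.mul_add_div hL, Nat.div_eq_of_lt v.2, add_zero]
  have hmod : ∀ (b : Fin (n*r/L)) (v : Fin L), (b.val * L + v.val) % L = v.val := by
    intro b v
    rw [mul_comm, Nat.mul_add_mod, Nat.mod_eq_of_lt v.2]
  have hinj : ∀ x : (Fin r ↪ Fin (n*r/L)) × (Fin r → (Fin 2 ↪ Fin L)), Function.Injective
    (fun a : Fin 2 × Fin r => (⟨(x.1 a.2).val * L + (x.2 a.2 a.1).val, hlt _ _⟩ : Fin (n*r))) := by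
    rintro ⟨b, v⟩ ⟨c, i⟩ ⟨c', i'⟩ h
    simp only [Fin.mk.injEq] at h
    have h1 : (b i).val = (b i').val := by
      rw [← hdiv (b i) (v i c), h, hdiv]
    have h1' : i = i' := b.injective (Fin.ext h1)
    subst h1'
    have h2 : (v i c).val = (v i c').val := by
      rw [← hmod (b i) (v i c), h, hmod]
    have h2' : c = c' := (v i).injective (Fin.ext h2)
    rw [h2']
  refine card_le_card_of_injOn (fun x => ⟨_, hinj x⟩) ?_ ?_
  · rintro ⟨b, v⟩ _
    simp only [coe_filter, mem_univ, true_and, Set.mem_ofPred_eq, Function.Embedding.coeFn_mk, hdiv]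
    refine ⟨fun i => trivial, fun i i' h => b.injective (Fin.ext h)⟩
  · rintro ⟨b, v⟩ _ ⟨b', v'⟩ _ h
    have h' : ∀ c i, (b i).val * L + (v i c).val = (b' i).val * L + (v' i c).val := by
      intro c i
      have := DFunLike.congr_fun h (c, i)
      simpa using congrArg Fin.val this
    refine Prod.ext ?_ ?_
    · ext i
      show (b i).val = (b' i).val
      rw [← hdiv (b i) (v i 0), h', hdiv]
    · funext i
      ext c
      show (v i c).val = (v' i c).val
      rw [← hmod (b i) (v i c), h', hmod]

/-- the `j`-th edge -/
def edgeOf {n r : ℕ} (σ : Perm (Fin (n * r))) (j : Fin n) : Finset ℕ :=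
  univ.image (fun i : Fin r => (σ (finProdFinEquiv (j, i))).val + 1)

/-- the matching of a permutation -/
def mat {n r : ℕ} (σ : Perm (Fin (n * r))) : Finset (Finset ℕ) :=
  univ.image (fun j : Fin n => edgeOf σ j)

theorem mem_edgeOf {n r : ℕ} (σ : Perm (Fin (n * r))) (j : Fin n) (v : ℕ) :
    v ∈ edgeOf σ j ↔ ∃ i : Fin r, (σ (finProdFinEquiv (j, i))).val + 1 = v := by
  simp [edgeOf]

theorem mem_mSupport (M : Finset (Finset ℕ)) (v : ℕ) : v ∈ mSupport M ↔ ∃ e ∈ M, v ∈ e := by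
  simp [mSupport, Finset.mem_sup]

theorem pos_inj {n r : ℕ} (σ : Perm (Fin (n * r))) {j j' : Fin n} {i i' : Fin r}
    (h : (σ (finProdFinEquiv (j, i))).val + 1 = (σ (finProdFinEquiv (j', i'))).val + 1) :
    j = j' ∧ i = i' := by
  have h1 : σ (finProdFinEquiv (j, i)) = σ (finProdFinEquiv (j', i')) := Fin.ext (by omega)
  have h2 := finProdFinEquiv.injective (σ.injective h1)
  simpa using h2

theorem edgeOf_card {n r : ℕ} (σ : Perm (Fin (n * r))) (j : Fin n) : (edgeOf σ j).card = r := by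
  rw [edgeOf, card_image_of_injective, card_univ, Fintype.card_fin]
  intro i i' h
  exact (pos_inj σ h).2

theorem edgeOf_disj {n r : ℕ} (σ : Perm (Fin (n * r))) {j j' : Fin n} (h : j ≠ j') :
    Disjoint (edgeOf σ j) (edgeOf σ j') := by
  rw [Finset.disjoint_left]
  intro v h1 h2
  rw [mem_edgeOf] at h1 h2
  obtain ⟨i, rfl⟩ := h1
  obtain ⟨i', h2⟩ := h2
  exact h (pos_inj σ h2).1.symm

theorem edgeOf_inj {n r : ℕ} (hr : 0 < r) (σ : Perm (Fin (n * r))) : Function.Injective (edgeOf σ) := by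
  intro j j' h
  by_contra hne
  have := edgeOf_disj σ hne
  rw [h, disjoint_self] at this
  have h2 := edgeOf_card σ j'
  rw [this] at h2
  simp at h2
  omega

theorem mat_ordered {n r : ℕ} (hr : 0 < r) (σ : Perm (Fin (n * r))) : IsOrderedMatching r n (mat σ) := by
  refine ⟨⟨?_, ?_⟩, ?_, ?_⟩
  · intro e he
    simp only [mat, mem_image, mem_univ, true_and] at he
    obtain ⟨j, rfl⟩ := he
    exact edgeOf_card σ j
  · intro e he f hf hne
    simp only [mat, mem_image, mem_univ, true_and] at he hf
    obtain ⟨j, rfl⟩ := he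
    obtain ⟨j', rfl⟩ := hf
    exact edgeOf_disj σ (fun h => hne (by rw [h]))
  · rw [mat, card_image_of_injective _ (edgeOf_inj hr σ), card_univ, Fintype.card_fin]
  · ext v
    rw [mem_mSupport, Finset.mem_Icc]
    simp only [mat, mem_image, mem_univ, true_and, exists_exists_eq_and, mem_edgeOf]
    constructor
    · rintro ⟨j, i, rfl⟩
      have := (σ (finProdFinEquiv (j, i))).2
      have hc := mul_comm n r
      omega
    · rintro ⟨h1, h2⟩
      have h3 : v - 1 < n * r := by rw [mul_comm]; omega
      refine ⟨(finProdFinEquiv.symm (σ.symm ⟨v - 1, h3⟩)).1, (finProdFinEquiv.symm (σ.symm ⟨v - 1, h3⟩)).2, ?_⟩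
      rw [Prod.mk.eta, Equiv.apply_symm_apply, Equiv.apply_symm_apply]
      simp
      omega

theorem mat_surj {n r : ℕ} (M : Finset (Finset ℕ)) (hM : IsOrderedMatching r n M) :
    ∃ σ : Perm (Fin (n * r)), mat σ = M := by
  obtain ⟨⟨h1, h2⟩, h3, h4⟩ := hM
  let E := (M.equivFinOfCardEq h3).symm
  let G : ∀ j : Fin n, Fin r ≃ (E j).1 := fun j => ((E j).1.equivFinOfCardEq (h1 _ (E j).2)).symm
  have hmem : ∀ j i, 1 ≤ (G j i).1 ∧ (G j i).1 ≤ r * n := by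
    intro j i
    rw [← Finset.mem_Icc, ← h4, mem_mSupport]
    exact ⟨_, (E j).2, (G j i).2⟩
  obtain ⟨H, hH⟩ : ∃ H : Fin n × Fin r → ℕ, ∀ j i, H (j, i) = (G j i).1 := ⟨fun x => (G x.1 x.2).1, fun _ _ => rfl⟩
  have hHm : ∀ x, 1 ≤ H x ∧ H x ≤ r * n := by
    rintro ⟨j, i⟩
    rw [hH]; exact hmem j i
  let F : Fin (n * r) → Fin (n * r) := fun x =>
    ⟨H (finProdFinEquiv.symm x) - 1, by
      have := hHm (finProdFinEquiv.symm x)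
      have hc := mul_comm n r
      omega⟩
  have hF : Function.Injective F := by
    intro x y hxy
    obtain ⟨⟨j, i⟩, rfl⟩ := finProdFinEquiv.surjective x
    obtain ⟨⟨j', i'⟩, rfl⟩ := finProdFinEquiv.surjective y
    have hxy' : H (j, i) - 1 = H (j', i') - 1 := by
      have h5 : H (finProdFinEquiv.symm (finProdFinEquiv (j, i))) - 1 =
        H (finProdFinEquiv.symm (finProdFinEquiv (j', i'))) - 1 := congrArg Fin.val hxy
      rwa [Equiv.symm_apply_apply, Equiv.symm_apply_apply] at h5
    rw [hH, hH] at hxy'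
    have a := hmem j i
    have b := hmem j' i'
    have hv : (G j i).1 = (G j' i').1 := by omega
    have hj : j = j' := by
      by_contra hne
      have hne' : (E j).1 ≠ (E j').1 := fun h => hne (E.injective (Subtype.ext h))
      have := h2 _ (E j).2 _ (E j').2 hne'
      exact (Finset.disjoint_left.mp this) (G j i).2 (hv ▸ (G j' i').2)
    subst hj
    have : i = i' := (G j).injective (Subtype.ext hv)
    rw [this]
  let σ : Perm (Fin (n * r)) := Equiv.ofBijective F (Finite.injective_iff_bijective.mp hF)
  refine ⟨σ, ?_⟩
  have he : ∀ j, edgeOf σ j = (E j).1 := by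
    intro j
    ext v
    rw [mem_edgeOf]
    have hs : ∀ i, (σ (finProdFinEquiv (j, i))).val + 1 = (G j i).1 := by
      intro i
      have : (σ (finProdFinEquiv (j, i))).val = (G j i).1 - 1 := by
        rw [← hH]
        show H (finProdFinEquiv.symm (finProdFinEquiv (j, i))) - 1 = _
        rw [Equiv.symm_apply_apply]
      have a := hmem j i
      omega
    simp only [hs]
    constructor
    · rintro ⟨i, rfl⟩
      exact (G j i).2
    · intro hv
      exact ⟨(G j).symm ⟨v, hv⟩, by simp⟩
  ext e
  simp only [mat, mem_image, mem_univ, true_and, he]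
  constructor
  · rintro ⟨j, rfl⟩
    exact (E j).2
  · intro h
    exact ⟨E.symm ⟨e, h⟩, by simp⟩

/-- extension of a permutation to vertices -/
def extP {N : ℕ} (π : Perm (Fin N)) (v : ℕ) : ℕ := if h : v - 1 < N then (π ⟨v - 1, h⟩).val + 1 else 0

theorem mat_mul {n r : ℕ} (π σ : Perm (Fin (n * r))) :
    mat (π * σ) = (mat σ).image (fun e => e.image (extP π)) := by
  rw [mat, mat, image_image]
  congr 1
  funext j
  simp only [Function.comp, edgeOf, image_image]
  congr 1
  funext i
  simp [extP]

theorem ratio_eq {n r : ℕ} (hr : 0 < r) (P : Finset (Finset ℕ) → Prop) :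
    (Nat.card {M : Finset (Finset ℕ) | IsOrderedMatching r n M ∧ P M} : ℝ) /
      (Nat.card {M : Finset (Finset ℕ) | IsOrderedMatching r n M} : ℝ) =
    (Nat.card {σ : Perm (Fin (n * r)) | P (mat σ)} : ℝ) / (n * r).factorial := by
  classical
  have hfin : Finite {M : Finset (Finset ℕ) // IsOrderedMatching r n M} :=
    Finite.of_surjective (fun σ : Perm (Fin (n * r)) => ⟨mat σ, mat_ordered hr σ⟩) (by
      rintro ⟨M, hM⟩
      obtain ⟨σ, rfl⟩ := mat_surj M hM
      exact ⟨σ, rfl⟩)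
  have : Fintype {M : Finset (Finset ℕ) // IsOrderedMatching r n M} := Fintype.ofFinite _
  have h := unif_fiber (fun σ : Perm (Fin (n * r)) =>
    (⟨mat σ, mat_ordered hr σ⟩ : {M : Finset (Finset ℕ) // IsOrderedMatching r n M})) (by
      rintro ⟨M, hM⟩ ⟨M', hM'⟩
      obtain ⟨σ, rfl⟩ := mat_surj M hM
      obtain ⟨σ', rfl⟩ := mat_surj M' hM'
      refine ⟨fun τ => σ' * σ⁻¹ * τ, mul_right_injective _, ?_⟩
      intro a ha
      simp only [Subtype.mk.injEq] at ha ⊢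
      rw [mat_mul, ha, ← mat_mul]
      simp) (fun M => P M.1)
  rw [Fintype.card_perm, Fintype.card_fin] at h
  have e1 : Nat.card {M : Finset (Finset ℕ) | IsOrderedMatching r n M} =
      Fintype.card {M : Finset (Finset ℕ) // IsOrderedMatching r n M} :=
    Nat.card_eq_fintype_card (α := {M : Finset (Finset ℕ) // IsOrderedMatching r n M})
  have e2 : Nat.card {M : Finset (Finset ℕ) | IsOrderedMatching r n M ∧ P M} =
      (univ.filter (fun M : {M : Finset (Finset ℕ) // IsOrderedMatching r n M} => P M.1)).card := by
    rw [← Fintype.card_subtype, ← Nat.card_eq_fintype_card]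
    exact Nat.card_congr (Equiv.subtypeSubtypeEquivSubtypeInter _ _).symm
  have e3 : Nat.card {σ : Perm (Fin (n * r)) | P (mat σ)} =
      (univ.filter (fun σ : Perm (Fin (n * r)) => P (mat σ))).card := by
    rw [← Fintype.card_subtype, ← Nat.card_eq_fintype_card]
    rfl
  rw [e1, e2, e3]
  have hpos : 0 < Fintype.card {M : Finset (Finset ℕ) // IsOrderedMatching r n M} :=
    Fintype.card_pos_iff.mpr ⟨⟨mat 1, mat_ordered hr 1⟩⟩
  rw [div_eq_div_iff (by positivity) (by positivity)]
  have h' : ((univ.filter (fun σ : Perm (Fin (n * r)) => P (mat σ))).card : ℝ) * Fintype.card {M : Finset (Finset ℕ) // IsOrderedMatching r n M} = (n*r).factorial * (univ.filter (fun M : {M : Finset (Finset ℕ) // IsOrderedMatching r n M} => P M.1)).card := by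
    exact_mod_cast h
  linarith

/-- family of pairs of edges with equal and pairwise disjoint block shapes -/
def GoodQ {n r : ℕ} (L : ℕ) (σ : Perm (Fin (n * r))) (Q : Finset (Fin n × Fin n)) : Prop :=
  (∀ x ∈ Q, x.1 ≠ x.2 ∧ Epair L σ x.1 x.2) ∧
    ∀ x ∈ Q, ∀ y ∈ Q, x ≠ y → ∀ i i', B L σ x.1 i ≠ B L σ y.1 i'

theorem good_uniq {n r L : ℕ} (hr : 0 < r) {σ : Perm (Fin (n * r))} {Q : Finset (Fin n × Fin n)}
    (hQ : GoodQ L σ Q) {x y : Fin n × Fin n} (hx : x ∈ Q) (hy : y ∈ Q)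
    (h : x.1 = y.1 ∨ x.2 = y.2 ∨ x.1 = y.2 ∨ x.2 = y.1) : x = y := by
  by_contra hne
  have h0 := hQ.2 x hx y hy hne ⟨0, hr⟩ ⟨0, hr⟩
  have h1 := (hQ.1 x hx).2.1 ⟨0, hr⟩
  have h2 := (hQ.1 y hy).2.1 ⟨0, hr⟩
  rcases h with h | h | h | h
  · rw [h] at h0; exact h0 rfl
  · rw [h1, h2, h] at h0; exact h0 rfl
  · rw [h2, h] at h0; exact h0 rfl
  · rw [h1, h] at h0; exact h0 rfl

theorem good_twins {n r L : ℕ} (hr : 0 < r) {σ : Perm (Fin (n * r))} {Q : Finset (Fin n × Fin n)}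
    (hQ : GoodQ L σ Q) : HasTwins (mat σ) Q.card := by
  classical
  let val : Fin n × Fin r → ℕ := fun p => (σ (finProdFinEquiv p)).val + 1
  have hval : Function.Injective val := by
    rintro ⟨j, i⟩ ⟨j', i'⟩ h
    have := pos_inj σ h
    rw [this.1, this.2]
  have hval' : ∀ j i, (val (j, i) - 1) / L = B L σ j i := fun j i => by simp [val, B]
  obtain ⟨s, hs⟩ : ∃ s : Fin n → Fin n, ∀ x ∈ Q, s x.1 = x.2 := by
    refine ⟨fun j => if h : ∃ x ∈ Q, x.1 = j then h.choose.2 else j, ?_⟩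
    intro x hx
    have h : ∃ y ∈ Q, y.1 = x.1 := ⟨x, hx, rfl⟩
    simp only [h, dif_pos]
    rw [good_uniq hr hQ h.choose_spec.1 hx (Or.inl h.choose_spec.2)]
  obtain ⟨f, hf⟩ : ∃ f : ℕ → ℕ, ∀ x ∈ Q, ∀ i, f (val (x.1, i)) = val (x.2, i) := by
    refine ⟨Function.extend val (fun p => val (s p.1, p.2)) 0, ?_⟩
    intro x hx i
    rw [hval.extend_apply, hs x hx]
  have hmem : ∀ j v, v ∈ edgeOf σ j ↔ ∃ i, val (j, i) = v := fun j v => mem_edgeOf σ j v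
  have hsup1 : ∀ v, v ∈ mSupport (Q.image fun x => edgeOf σ x.1) ↔ ∃ x ∈ Q, ∃ i, val (x.1, i) = v := by
    intro v
    rw [mem_mSupport]
    simp [hmem]
  have hsup2 : ∀ v, v ∈ mSupport (Q.image fun x => edgeOf σ x.2) ↔ ∃ x ∈ Q, ∃ i, val (x.2, i) = v := by
    intro v
    rw [mem_mSupport]
    simp [hmem]
  have hmono : ∀ x ∈ Q, ∀ y ∈ Q, ∀ i i', val (x.1, i) < val (y.1, i') → val (x.2, i) < val (y.2, i') := by
    intro x hx y hy i i' hlt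
    have hle : B L σ x.1 i ≤ B L σ y.1 i' := by
      rw [← hval', ← hval']
      exact Nat.div_le_div_right (by omega)
    rcases hle.lt_or_eq with h | h
    · by_contra hcon
      rw [(hQ.1 x hx).2.1, (hQ.1 y hy).2.1, ← hval', ← hval'] at h
      have : (val (y.2, i') - 1) / L ≤ (val (x.2, i) - 1) / L := Nat.div_le_div_right (by omega)
      omega
    · exfalso
      by_cases hxy : x = y
      · subst hxy
        have := (hQ.1 x hx).2.2 h
        subst this
        exact lt_irrefl _ hlt
      · exact hQ.2 x hx y hy hxy i i' h
  refine ⟨Q.image fun x => edgeOf σ x.1, Q.image fun x => edgeOf σ x.2, ?_, ?_, ?_, ⟨f, ?_, ?_, ?_⟩, ?_, ?_⟩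
  · intro e he
    simp only [mem_image] at he
    obtain ⟨x, _, rfl⟩ := he
    simp [mat]
  · intro e he
    simp only [mem_image] at he
    obtain ⟨x, _, rfl⟩ := he
    simp [mat]
  · rw [Finset.disjoint_left]
    intro v h1 h2
    rw [hsup1] at h1
    rw [hsup2] at h2
    obtain ⟨x, hx, i, rfl⟩ := h1
    obtain ⟨y, hy, i', h⟩ := h2
    have h3 := hval h
    simp only [Prod.mk.injEq] at h3
    have := good_uniq hr hQ hx hy (Or.inr (Or.inr (Or.inl h3.1.symm)))
    subst this
    exact (hQ.1 x hx).1 h3.1.symm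
  · refine ⟨?_, ?_, ?_⟩
    · intro v hv
      simp only [SetLike.mem_coe] at hv ⊢
      rw [hsup1] at hv
      rw [hsup2]
      obtain ⟨x, hx, i, rfl⟩ := hv
      exact ⟨x, hx, i, (hf x hx i).symm⟩
    · intro v hv w hw h
      simp only [SetLike.mem_coe] at hv hw
      rw [hsup1] at hv hw
      obtain ⟨x, hx, i, rfl⟩ := hv
      obtain ⟨y, hy, i', rfl⟩ := hw
      rw [hf x hx, hf y hy] at h
      have h3 := hval h
      simp only [Prod.mk.injEq] at h3
      have := good_uniq hr hQ hx hy (Or.inr (Or.inl h3.1))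
      rw [this, h3.2]
    · intro v hv
      simp only [SetLike.mem_coe] at hv
      rw [hsup2] at hv
      obtain ⟨x, hx, i, rfl⟩ := hv
      refine ⟨val (x.1, i), ?_, hf x hx i⟩
      simp only [SetLike.mem_coe]
      rw [hsup1]
      exact ⟨x, hx, i, rfl⟩
  · intro v hv w hw h
    rw [hsup1] at hv hw
    obtain ⟨x, hx, i, rfl⟩ := hv
    obtain ⟨y, hy, i', rfl⟩ := hw
    rw [hf x hx, hf y hy]
    exact hmono x hx y hy i i' h
  · rw [image_image]
    refine image_congr ?_
    intro x hx
    ext v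
    simp only [Function.comp, mem_image, hmem]
    constructor
    · rintro ⟨i, rfl⟩
      exact ⟨_, ⟨i, rfl⟩, hf x hx i⟩
    · rintro ⟨_, ⟨i, rfl⟩, rfl⟩
      exact ⟨i, (hf x hx i).symm⟩
  · refine card_image_of_injOn ?_
    intro x hx y hy h
    exact good_uniq hr hQ hx hy (Or.inl (edgeOf_inj hr σ h))
  · refine card_image_of_injOn ?_
    intro x hx y hy h
    exact good_uniq hr hQ hx hy (Or.inr (Or.inl (edgeOf_inj hr σ h)))

theorem good_swap {n r L : ℕ} {σ : Perm (Fin (n * r))} {Q : Finset (Fin n × Fin n)}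
    (hQ : GoodQ L σ Q) (p q : Fin (n * r))
    (hp : ∀ x ∈ Q, (finProdFinEquiv.symm p).1 ≠ x.1 ∧ (finProdFinEquiv.symm p).1 ≠ x.2)
    (hq : ∀ x ∈ Q, (finProdFinEquiv.symm q).1 ≠ x.1 ∧ (finProdFinEquiv.symm q).1 ≠ x.2) :
    GoodQ L (σ * swap p q) Q := by
  have key : ∀ j, (finProdFinEquiv.symm p).1 ≠ j → (finProdFinEquiv.symm q).1 ≠ j →
      B L (σ * swap p q) j = B L σ j := by
    intro j h1 h2
    funext i
    unfold B
    rw [Perm.mul_apply, swap_apply_of_ne_of_ne]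
    · rintro rfl
      rw [Equiv.symm_apply_apply] at h1
      exact h1 rfl
    · rintro rfl
      rw [Equiv.symm_apply_apply] at h2
      exact h2 rfl
  refine ⟨fun x hx => ⟨(hQ.1 x hx).1, ?_⟩, ?_⟩
  · unfold Epair
    rw [key _ (hp x hx).1 (hq x hx).1, key _ (hp x hx).2 (hq x hx).2]
    exact (hQ.1 x hx).2
  · intro x hx y hy hne i i'
    rw [key _ (hp x hx).1 (hq x hx).1, key _ (hp y hy).1 (hq y hy).1]
    exact hQ.2 x hx y hy hne i i'

theorem nu_exists (n r L : ℕ) (hr : 0 < r) :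
    ∃ ν : Perm (Fin (n * r)) → ℕ, (∀ σ, HasTwins (mat σ) (ν σ)) ∧
      (∀ σ Q, GoodQ L σ Q → Q.card ≤ ν σ) ∧
      (n * r).factorial * ∑ σ, (ν σ : ℝ) ^ 2 - (∑ σ, (ν σ : ℝ))^2 ≤
        (n * r).factorial * (4 * r * (2 + Real.log (n * r : ℕ)) * ∑ σ, (ν σ : ℝ)) := by
  classical
  have hmax : ∀ σ : Perm (Fin (n * r)), ∃ Q, GoodQ L σ Q ∧ ∀ Q', GoodQ L σ Q' → Q'.card ≤ Q.card := by
    intro σ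
    obtain ⟨Q, hQ, hm⟩ := Finset.exists_max_image (univ.filter (fun Q => GoodQ L σ Q)) card
      ⟨∅, by simp [GoodQ]⟩
    refine ⟨Q, by simpa using hQ, fun Q' h => hm Q' (by simpa using h)⟩
  choose Q hQ hm using hmax
  refine ⟨fun σ => (Q σ).card, fun σ => good_twins hr (hQ σ), hm, ?_⟩
  let ed : Fin (n * r) → Fin n := fun p => (finProdFinEquiv.symm p).1
  let T : Perm (Fin (n * r)) → Fin (n * r) → Finset (Fin n × Fin n) :=
    fun σ p => (Q σ).filter (fun x => ed p = x.1 ∨ ed p = x.2)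
  have hT1 : ∀ σ p, (T σ p).card ≤ 1 := by
    intro σ p
    rw [card_le_one]
    intro x hx y hy
    simp only [T, mem_filter] at hx hy
    refine good_uniq hr (hQ σ) hx.1 hy.1 ?_
    rcases hx.2 with h | h <;> rcases hy.2 with h' | h' <;> rw [← h, ← h'] <;> simp
  have hlip : ∀ σ p q, (((Q σ).card : ℕ) : ℝ) - ((Q (σ * swap p q)).card : ℕ) ≤ ((T σ p).card : ℝ) + (T σ q).card := by
    intro σ p q
    have hg : GoodQ L (σ * swap p q) ((Q σ) \ (T σ p ∪ T σ q)) := by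
      refine good_swap (Q := (Q σ) \ (T σ p ∪ T σ q)) ⟨fun x hx => (hQ σ).1 x (mem_sdiff.mp hx).1,
        fun x hx y hy => (hQ σ).2 x (mem_sdiff.mp hx).1 y (mem_sdiff.mp hy).1⟩ p q ?_ ?_
      · intro x hx
        simp only [T, mem_sdiff, mem_union, mem_filter, not_or, not_and] at hx
        exact hx.2.1 hx.1
      · intro x hx
        simp only [T, mem_sdiff, mem_union, mem_filter, not_or, not_and] at hx
        exact hx.2.2 hx.1
    have h1 := hm _ _ hg
    have h2 := le_card_sdiff (T σ p ∪ T σ q) (Q σ)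
    have h3 := card_union_le (T σ p) (T σ q)
    have h4 : (Q σ).card ≤ (Q (σ * swap p q)).card + ((T σ p).card + (T σ q).card) := by omega
    have h5 : ((Q σ).card : ℝ) ≤ (Q (σ * swap p q)).card + ((T σ p).card + (T σ q).card) := by exact_mod_cast h4
    linarith
  have hsum : ∀ σ, ∑ p, ((T σ p).card : ℝ) ≤ 2 * r * (Q σ).card := by
    intro σ
    have hed : ∀ j : Fin n, (univ.filter (fun p => ed p = j)).card = r := by
      intro j
      rw [show univ.filter (fun p => ed p = j) = (univ : Finset (Fin r)).image (fun i => finProdFinEquiv (j, i)) from ?_]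
      · rw [card_image_of_injective, card_univ, Fintype.card_fin]
        intro i i' h
        simpa using finProdFinEquiv.injective h
      · ext p
        obtain ⟨⟨j', i⟩, rfl⟩ := finProdFinEquiv.surjective p
        have : ed (finProdFinEquiv (j', i)) = j' := by simp only [ed, Equiv.symm_apply_apply]
        simp only [mem_filter, mem_univ, true_and, mem_image, this]
        constructor
        · rintro rfl; exact ⟨i, rfl⟩
        · rintro ⟨i', h⟩
          have := finProdFinEquiv.injective h
          simp at this; exact this.1.symm
    have : ∑ p, (T σ p).card ≤ 2 * r * (Q σ).card := by
      calc ∑ p, (T σ p).card = ∑ x ∈ Q σ, (univ.filter (fun p => ed p = x.1 ∨ ed p = x.2)).card := by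
            simp only [T, card_filter]
            rw [sum_comm]
        _ ≤ ∑ x ∈ Q σ, 2 * r := by
            refine sum_le_sum fun x _ => ?_
            rw [filter_or]
            refine (card_union_le _ _).trans ?_
            rw [hed, hed]; omega
        _ = _ := by rw [sum_const, smul_eq_mul, mul_comm]
    exact_mod_cast this
  have hv := var_bound (fun σ => ((Q σ).card : ℝ)) (fun σ p => ((T σ p).card : ℝ)) (fun _ _ => by positivity)
    (fun σ p => by exact_mod_cast hT1 σ p) hlip
  refine hv.trans ?_
  refine mul_le_mul_of_nonneg_left ?_ (by positivity)
  have hlog : 0 ≤ Real.log (n * r : ℕ) := Real.log_natCast_nonneg _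
  calc _ ≤ 2 * (2 + Real.log (n * r : ℕ)) * ∑ σ, 2 * r * ((Q σ).card : ℝ) :=
        mul_le_mul_of_nonneg_left (sum_le_sum fun σ _ => hsum σ) (by positivity)
    _ = _ := by rw [← mul_sum]; ring

theorem cheb {α : Type*} [Fintype α] [Nonempty α] (ν : α → ℝ) (μ V : ℝ) (hμ : 0 < μ)
    (hS : Fintype.card α * μ ≤ ∑ σ, ν σ)
    (hV : Fintype.card α * ∑ σ, ν σ ^ 2 - (∑ σ, ν σ)^2 ≤ Fintype.card α * (V * ∑ σ, ν σ)) (hV0 : 0 ≤ V) :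
    (Nat.card {σ | ¬ μ / 2 ≤ ν σ} : ℝ) ≤ 4 * V / μ * Fintype.card α := by
  classical
  set K : ℝ := (Fintype.card α : ℝ) with hK
  have hK0 : 0 < K := by rw [hK]; exact_mod_cast Fintype.card_pos
  set S := ∑ σ, ν σ with hSd
  set m := S / K with hm
  have hmS : S = K * m := by rw [hm]; field_simp
  have hmμ : μ ≤ m := by rw [hm, le_div_iff₀ hK0]; linarith
  have hvar : ∑ σ, (ν σ - m)^2 ≤ V * S := by
    have : K * ∑ σ, (ν σ - m)^2 = K * ∑ σ, ν σ ^ 2 - S^2 := by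
      have e : ∀ σ, (ν σ - m)^2 = ν σ ^2 - 2 * m * ν σ + m^2 := fun σ => by ring
      simp_rw [e, sum_add_distrib, sum_sub_distrib, ← mul_sum]
      rw [← hSd, sum_const, card_univ, nsmul_eq_mul, ← hK, hmS]
      ring
    rw [← this] at hV
    exact le_of_mul_le_mul_left hV hK0
  have hc : Nat.card {σ | ¬ μ / 2 ≤ ν σ} = (univ.filter (fun σ => ¬ μ / 2 ≤ ν σ)).card := by
    rw [← Fintype.card_subtype, ← Nat.card_eq_fintype_card]
    rfl
  rw [hc]
  have h1 : ((univ.filter (fun σ => ¬ μ / 2 ≤ ν σ)).card : ℝ) * (m/2)^2 ≤ V * S := by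
    refine le_trans ?_ hvar
    rw [← nsmul_eq_mul, ← sum_const]
    refine le_trans (sum_le_sum (g := fun σ => (ν σ - m)^2) ?_) (sum_le_sum_of_subset_of_nonneg (filter_subset _ _) fun _ _ _ => sq_nonneg _)
    intro σ hσ
    simp at hσ
    nlinarith
  have hm0 : 0 < m := hμ.trans_le hmμ
  set c : ℝ := ((univ.filter (fun σ => ¬ μ / 2 ≤ ν σ)).card : ℝ)
  have h2 : c ≤ 4 * V * K / m := by
    rw [le_div_iff₀ hm0]
    rw [hmS] at h1
    have : m * (c * m) ≤ m * (4 * V * K) := by nlinarith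
    exact le_of_mul_le_mul_left this hm0
  refine h2.trans ?_
  rw [div_mul_eq_mul_div]
  exact div_le_div_of_nonneg_left (by positivity) hμ hmμ

theorem emb3 {n : ℕ} (a b c : Fin n) (h1 : a ≠ b) (h2 : a ≠ c) (h3 : b ≠ c) :
    ∃ u : Fin 3 ↪ Fin n, u 0 = a ∧ u 1 = b ∧ u 2 = c := by
  refine ⟨⟨![a, b, c], ?_⟩, rfl, rfl, rfl⟩
  intro x y
  fin_cases x <;> fin_cases y <;> simp [h1, h2, h3, h1.symm, h2.symm, h3.symm]

theorem emb4 {n : ℕ} (a b c d : Fin n) (h1 : a ≠ b) (h2 : a ≠ c) (h3 : b ≠ c) (h4 : a ≠ d) (h5 : b ≠ d)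
    (h6 : c ≠ d) : ∃ u : Fin 4 ↪ Fin n, u 0 = a ∧ u 1 = b ∧ u 2 = c ∧ u 3 = d := by
  refine ⟨⟨![a, b, c, d], ?_⟩, rfl, rfl, rfl, rfl⟩
  intro x y
  fin_cases x <;> fin_cases y <;>
    simp [h1, h2, h3, h4, h5, h6, h1.symm, h2.symm, h3.symm, h4.symm, h5.symm, h6.symm]

theorem emb2 {n : ℕ} (a b : Fin n) (h1 : a ≠ b) : ∃ u : Fin 2 ↪ Fin n, u 0 = a ∧ u 1 = b := by
  refine ⟨⟨![a, b], ?_⟩, rfl, rfl⟩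
  intro x y
  fin_cases x <;> fin_cases y <;> simp [h1, h1.symm]

theorem desc_lower (N s : ℕ) (h : 2 * s ≤ N) : ((N:ℝ) / 2) ^ s ≤ (N.descFactorial s : ℝ) := by
  have h1 : (((N + 1 - s : ℕ) : ℝ)) ^ s ≤ (N.descFactorial s : ℝ) := by
    exact_mod_cast Nat.pow_sub_le_descFactorial N s
  refine le_trans (pow_le_pow_left₀ (by positivity) ?_ s) h1
  rw [Nat.cast_sub (by omega)]
  push_cast
  have : (2 * s : ℝ) ≤ N := by exact_mod_cast h
  linarith

/-- conversion of an integer upper bound to a real one -/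
theorem upper_conv (N L s d c F : ℕ) (hN : 0 < N) (h : 2 * s ≤ N) (hd : d ≤ s)
    (hc : c * N.descFactorial s ≤ F * (N ^ (s - d) * L ^ d)) :
    (c : ℝ) ≤ F * (2 ^ s * ((L:ℝ) / N) ^ d) := by
  have h1 : (c:ℝ) * N.descFactorial s ≤ F * ((N:ℝ) ^ (s - d) * (L:ℝ) ^ d) := by exact_mod_cast hc
  have h2 := desc_lower N s h
  have hN' : (0:ℝ) < N := by exact_mod_cast hN
  have h3 : (c:ℝ) * ((N:ℝ)/2)^s ≤ F * ((N:ℝ) ^ (s - d) * (L:ℝ) ^ d) :=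
    (mul_le_mul_of_nonneg_left h2 (by positivity)).trans h1
  rw [← le_div_iff₀ (by positivity)] at h3
  refine h3.trans (le_of_eq ?_)
  rw [div_pow, div_pow]
  have : (N:ℝ)^s = (N:ℝ)^(s-d) * (N:ℝ)^d := by rw [← pow_add]; congr 1; omega
  rw [this]
  field_simp

theorem lower_conv (N L r c F : ℕ) (hN : 0 < N) (hL : 2 ≤ L) (hm : 2 * r ≤ N / L) (hm1 : 1 ≤ N / L)
    (hc : F * ((N/L).descFactorial r * (L.descFactorial 2) ^ r) ≤ c * N.descFactorial (2 * r)) :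
    F * (((L:ℝ) / N) / 8) ^ r ≤ (c : ℝ) := by
  have hN' : (0:ℝ) < N := by exact_mod_cast hN
  have hL' : (2:ℝ) ≤ L := by exact_mod_cast hL
  have h1 : (F:ℝ) * ((N/L).descFactorial r * ((L.descFactorial 2 : ℕ) : ℝ) ^ r) ≤ c * N.descFactorial (2 * r) := by
    exact_mod_cast hc
  have h2 : (N.descFactorial (2 * r) : ℝ) ≤ (N:ℝ) ^ (2 * r) := by
    exact_mod_cast Nat.descFactorial_le_pow N (2 * r)
  have h3 := desc_lower (N / L) r hm
  have h4 : (N:ℝ) / (2 * L) ≤ ((N / L : ℕ) : ℝ) := by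
    rw [div_le_iff₀ (by positivity)]
    have h5 : N < (N / L + 1) * L := by
      rw [mul_comm]; exact Nat.lt_mul_div_succ N (by omega)
    have h6 : N ≤ (N / L) * (2 * L) := by nlinarith
    exact_mod_cast h6
  have h5 : ((L:ℝ)^2 / 2) ≤ ((L.descFactorial 2 : ℕ) : ℝ) := by
    have : L.descFactorial 2 = (L - 1) * L := by simp [Nat.descFactorial]
    rw [this, Nat.cast_mul, Nat.cast_sub (by omega)]
    push_cast
    nlinarith
  have h6 : (F:ℝ) * (((N:ℝ) / (4 * L)) ^ r * ((L:ℝ)^2 / 2) ^ r) ≤ c * (N:ℝ) ^ (2 * r) := by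
    refine le_trans ?_ (h1.trans (mul_le_mul_of_nonneg_left h2 (by positivity)))
    refine mul_le_mul_of_nonneg_left ?_ (by positivity)
    refine mul_le_mul ?_ (pow_le_pow_left₀ (by positivity) h5 r) (by positivity) (by positivity)
    refine le_trans (pow_le_pow_left₀ (by positivity) ?_ r) h3
    calc (N:ℝ) / (4 * L) = (N:ℝ) / (2 * L) / 2 := by field_simp; norm_num
      _ ≤ _ := by linarith
  rw [← div_le_iff₀ (by positivity)] at h6
  refine le_trans (le_of_eq ?_) h6
  rw [pow_mul, ← mul_pow, mul_div_assoc, ← div_pow]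
  congr 2
  field_simp
  norm_num

theorem sum_aux1 (n : ℕ) (T : ℝ) :
    ∑ z : (Fin n × Fin n) × (Fin n × Fin n), (if z.1.1 = z.2.1 then T else 0) = n^3 * T := by
  rw [Fintype.sum_prod_type]
  have : ∀ x : Fin n × Fin n, ∑ y : Fin n × Fin n, (if x.1 = y.1 then T else 0) = n * T := by
    intro x
    rw [Fintype.sum_prod_type_right]
    simp
  simp only [this]
  rw [sum_const, nsmul_eq_mul, card_univ, Fintype.card_prod, Fintype.card_fin]
  push_cast; ring

theorem sum_aux2 (n : ℕ) (T : ℝ) :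
    ∑ z : (Fin n × Fin n) × (Fin n × Fin n), (if z.1.2 = z.2.2 then T else 0) = n^3 * T := by
  rw [Fintype.sum_prod_type]
  have : ∀ x : Fin n × Fin n, ∑ y : Fin n × Fin n, (if x.2 = y.2 then T else 0) = n * T := by
    intro x
    rw [Fintype.sum_prod_type]
    simp
  simp only [this]
  rw [sum_const, nsmul_eq_mul, card_univ, Fintype.card_prod, Fintype.card_fin]
  push_cast; ring

theorem expect_bound (n r L : ℕ) (hr : 1 ≤ r) (hn : 8 ≤ n) (hL : 2 ≤ L) (hm : 2 * r ≤ n * r / L)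
    (ν : Perm (Fin (n * r)) → ℕ) (hν : ∀ σ Q, GoodQ L σ Q → Q.card ≤ ν σ) (q : ℝ)
    (hq : q = (L:ℝ) / (n * r : ℕ)) :
    ((n * r).factorial : ℝ) * ((n:ℝ)^2 / 9 * (q / 8) ^ r - (2 * n^3 * (2 ^ (3 * r) * q ^ (2 * r)) +
      n^4 * (r^2 * (2 ^ (4 * r) * q ^ (2 * r + 1))))) ≤ ∑ σ, (ν σ : ℝ) := by
  classical
  have hN : 0 < n * r := by positivity
  have hN8 : 8 * r ≤ n * r := Nat.mul_le_mul_right r hn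
  have hL0 : 0 < L := by omega
  let A : Finset (Fin n) := univ.filter (fun j => j.val < n / 2)
  let A' : Finset (Fin n) := univ.filter (fun j => ¬ j.val < n / 2)
  have hAcard : A.card = n / 2 := by
    have h1 : A.card = (Finset.range (n / 2)).card := by
      refine card_bij (fun j _ => j.val) ?_ ?_ ?_
      · intro j hj; simpa [A] using hj
      · intro a _ b _ h; exact Fin.ext h
      · intro b hb
        have : b < n / 2 := by simpa using hb
        exact ⟨⟨b, by omega⟩, by simp [A, this], rfl⟩
    simpa using h1
  have hA'card : A'.card = n - n / 2 := by
    have := card_filter_add_card_filter_not (s := (univ : Finset (Fin n))) (fun j => j.val < n / 2)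
    simp only [card_univ, Fintype.card_fin] at this
    have e : A.card + A'.card = n := this
    omega
  have hAA' : ∀ a ∈ A, ∀ b ∈ A', a ≠ b := by
    rintro a ha b hb rfl
    simp [A, A'] at ha hb
    omega
  let U := A ×ˢ A'
  let X : Perm (Fin (n * r)) → Finset (Fin n × Fin n) := fun σ => U.filter (fun x => Epair L σ x.1 x.2)
  let conf : Perm (Fin (n * r)) → (Fin n × Fin n) × (Fin n × Fin n) → Prop := fun σ z =>
    z.1 ≠ z.2 ∧ Epair L σ z.1.1 z.1.2 ∧ Epair L σ z.2.1 z.2.2 ∧ ∃ i i', B L σ z.1.1 i = B L σ z.2.1 i'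
  let Y : Perm (Fin (n * r)) → Finset ((Fin n × Fin n) × (Fin n × Fin n)) := fun σ => (U ×ˢ U).filter (conf σ)
  have hXY : ∀ σ, ((X σ).card : ℝ) - (Y σ).card ≤ ν σ := by
    intro σ
    have hg : GoodQ L σ (X σ \ (Y σ).image Prod.fst) := by
      refine ⟨?_, ?_⟩
      · intro x hx
        have h1 := (mem_sdiff.mp hx).1
        simp only [X, U, mem_filter, mem_product] at h1
        exact ⟨hAA' _ h1.1.1 _ h1.1.2, h1.2⟩
      · intro x hx y hy hne i i' h
        have h1 := mem_sdiff.mp hx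
        have h2 := (mem_sdiff.mp hy).1
        apply h1.2
        have h3 := h1.1
        simp only [X, mem_filter] at h2 h3
        rw [mem_image]
        refine ⟨(x, y), ?_, rfl⟩
        simp only [Y, mem_filter, mem_product]
        exact ⟨⟨h3.1, h2.1⟩, hne, h3.2, h2.2, i, i', h⟩
    have h1 := hν σ _ hg
    have h2 := le_card_sdiff ((Y σ).image Prod.fst) (X σ)
    have h3 : ((Y σ).image Prod.fst).card ≤ (Y σ).card := card_image_le
    have h4 : (X σ).card ≤ ν σ + (Y σ).card := by omega
    have h5 : ((X σ).card : ℝ) ≤ ν σ + (Y σ).card := by exact_mod_cast h4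
    linarith
  set F : ℝ := ((n * r).factorial : ℝ) with hF
  have hq0 : 0 ≤ q := by rw [hq]; positivity
  have hX : F * ((n:ℝ)^2 / 9 * (q / 8) ^ r) ≤ ∑ σ, ((X σ).card : ℝ) := by
    have e1 : ∑ σ, (X σ).card = ∑ x ∈ U, (univ.filter (fun σ : Perm (Fin (n * r)) => Epair L σ x.1 x.2)).card := by
      simp only [X, card_filter]
      rw [sum_comm]
    have e2 : ∀ x ∈ U, F * (q / 8) ^ r ≤ ((univ.filter (fun σ : Perm (Fin (n * r)) => Epair L σ x.1 x.2)).card : ℝ) := by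
      intro x hx
      simp only [U, mem_product] at hx
      obtain ⟨u, h0, h1⟩ := emb2 x.1 x.2 (hAA' _ hx.1 _ hx.2)
      have := pair_lower (r := r) hL0 u
      rw [h0, h1] at this
      rw [hq]
      refine lower_conv (n * r) L r _ _ hN hL hm (by omega) ?_
      convert this
    have e3 : (n:ℝ)^2 / 9 ≤ (U.card : ℝ) := by
      rw [card_product, hAcard, hA'card]
      have a1 : (n:ℝ) / 3 ≤ ((n / 2 : ℕ) : ℝ) := by
        rw [div_le_iff₀ (by norm_num)]
        exact_mod_cast (by omega)
      have a2 : (n:ℝ) / 3 ≤ ((n - n / 2 : ℕ) : ℝ) := by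
        rw [div_le_iff₀ (by norm_num)]
        exact_mod_cast (by omega)
      push_cast at a1 a2 ⊢
      calc (n:ℝ)^2 / 9 = ((n:ℝ) / 3) * ((n:ℝ) / 3) := by ring
        _ ≤ _ := mul_le_mul a1 a2 (by positivity) (by positivity)
    calc F * ((n:ℝ)^2 / 9 * (q / 8) ^ r) ≤ F * (U.card * (q / 8) ^ r) := by gcongr
      _ = ∑ x ∈ U, F * (q / 8) ^ r := by rw [sum_const, nsmul_eq_mul]; ring
      _ ≤ ∑ x ∈ U, ((univ.filter (fun σ : Perm (Fin (n * r)) => Epair L σ x.1 x.2)).card : ℝ) := sum_le_sum e2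
      _ = _ := by exact_mod_cast e1.symm
  have hT3 : ∀ u : Fin 3 ↪ Fin n, ((univ.filter (fun σ : Perm (Fin (n * r)) => ∀ i, B L σ (u 1) i = B L σ (u 0) i ∧
      B L σ (u 2) i = B L σ (u 0) i)).card : ℝ) ≤ F * (2 ^ (3 * r) * q ^ (2 * r)) := by
    intro u
    rw [hq]
    refine upper_conv (n * r) L (3 * r) (2 * r) _ _ hN (by omega) (by omega) ?_
    have := three_bound (r := r) hL0 u
    rw [show 3 * r - 2 * r = r by omega]
    convert this
  have hT4 : ∀ (u : Fin 4 ↪ Fin n) (x y : Fin r), ((univ.filter (fun σ : Perm (Fin (n * r)) => (∀ i, B L σ (u 1) i = B L σ (u 0) i ∧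
      B L σ (u 3) i = B L σ (u 2) i) ∧ B L σ (u 2) y = B L σ (u 0) x)).card : ℝ) ≤ F * (2 ^ (4 * r) * q ^ (2 * r + 1)) := by
    intro u x y
    rw [hq]
    refine upper_conv (n * r) L (4 * r) (2 * r + 1) _ _ hN (by omega) (by omega) ?_
    have := four_bound (r := r) hL0 u x y
    rw [show 4 * r - (2 * r + 1) = 2 * r - 1 by omega]
    convert this
  set T3 : ℝ := F * (2 ^ (3 * r) * q ^ (2 * r)) with hT3d
  set T4 : ℝ := F * (2 ^ (4 * r) * q ^ (2 * r + 1)) with hT4d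
  have hT30 : 0 ≤ T3 := by positivity
  have hT40 : 0 ≤ T4 := by positivity
  have hconf : ∀ z ∈ U ×ˢ U, ((univ.filter (fun σ => conf σ z)).card : ℝ) ≤
      (if z.1.1 = z.2.1 then T3 else 0) + (if z.1.2 = z.2.2 then T3 else 0) + r^2 * T4 := by
    rintro ⟨⟨a, b⟩, ⟨a', b'⟩⟩ hz
    simp only [U, mem_product] at hz
    obtain ⟨⟨ha, hb⟩, ⟨ha', hb'⟩⟩ := hz
    have d1 := hAA' a ha b hb
    have d2 := hAA' a ha b' hb'
    have d3 := hAA' a' ha' b hb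
    have d4 := hAA' a' ha' b' hb'
    have hT4r : 0 ≤ (r:ℝ)^2 * T4 := by positivity
    by_cases h1 : a = a'
    · subst h1
      by_cases h2 : b = b'
      · subst h2
        have : (univ.filter (fun σ => conf σ ((a, b), (a, b)))).card = 0 := by
          simp [conf]
        rw [this]
        simp only [if_true]
        push_cast
        positivity
      · obtain ⟨u, u0, u1, u2⟩ := emb3 a b b' d1 d2 h2
        have := hT3 u
        simp only [if_true, if_neg h2]
        refine le_trans ?_ (this.trans (by linarith))
        gcongr
        intro hc i
        rw [u0, u1, u2]
        exact ⟨(hc.2.1.1 i).symm, (hc.2.2.1.1 i).symm⟩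
    · by_cases h2 : b = b'
      · subst h2
        obtain ⟨u, u0, u1, u2⟩ := emb3 b a a' d1.symm d3.symm h1
        have := hT3 u
        simp only [if_true, if_neg h1]
        refine le_trans ?_ (this.trans (by linarith))
        gcongr
        intro hc i
        rw [u0, u1, u2]
        exact ⟨hc.2.1.1 i, hc.2.2.1.1 i⟩
      · obtain ⟨u, u0, u1, u2, u3⟩ := emb4 a b a' b' d1 h1 d3.symm d2 h2 d4
        simp only [if_neg h1, if_neg h2, zero_add]
        let S : Fin r × Fin r → Finset (Perm (Fin (n * r))) := fun w =>
          univ.filter (fun σ => (∀ i, B L σ (u 1) i = B L σ (u 0) i ∧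
            B L σ (u 3) i = B L σ (u 2) i) ∧ B L σ (u 2) w.2 = B L σ (u 0) w.1)
        have hsub : univ.filter (fun σ => conf σ ((a, b), (a', b'))) ⊆ univ.biUnion S := by
          intro σ hσ
          simp only [mem_filter, mem_univ, true_and, conf] at hσ
          obtain ⟨_, c1, c2, i, i', c3⟩ := hσ
          simp only [mem_biUnion, mem_univ, true_and, S, mem_filter]
          refine ⟨(i, i'), ?_, ?_⟩
          · intro x
            rw [u0, u1, u2, u3]
            exact ⟨(c1.1 x).symm, (c2.1 x).symm⟩
          · rw [u0, u2]
            exact c3.symm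
        have hcard := (card_le_card hsub).trans card_biUnion_le
        calc ((univ.filter (fun σ => conf σ ((a, b), (a', b')))).card : ℝ) ≤ ∑ w, ((S w).card : ℝ) := by exact_mod_cast hcard
          _ ≤ ∑ w : Fin r × Fin r, T4 := sum_le_sum fun w _ => hT4 u w.1 w.2
          _ = _ := by
            rw [sum_const, nsmul_eq_mul, card_univ, Fintype.card_prod, Fintype.card_fin]
            push_cast; ring
  have hY : ∑ σ, ((Y σ).card : ℝ) ≤ 2 * n^3 * T3 + n^4 * (r^2 * T4) := by
    have e1 : ∑ σ, (Y σ).card = ∑ z ∈ U ×ˢ U, (univ.filter (fun σ => conf σ z)).card := by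
      simp only [Y, card_filter]
      rw [sum_comm]
    calc ∑ σ, ((Y σ).card : ℝ) = ∑ z ∈ U ×ˢ U, ((univ.filter (fun σ => conf σ z)).card : ℝ) := by exact_mod_cast e1
      _ ≤ ∑ z ∈ U ×ˢ U, ((if z.1.1 = z.2.1 then T3 else 0) + (if z.1.2 = z.2.2 then T3 else 0) + r^2 * T4) := sum_le_sum hconf
      _ ≤ ∑ z : (Fin n × Fin n) × (Fin n × Fin n), ((if z.1.1 = z.2.1 then T3 else 0) + (if z.1.2 = z.2.2 then T3 else 0) + r^2 * T4) := by
          refine sum_le_sum_of_subset_of_nonneg (subset_univ _) fun z _ _ => ?_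
          have : 0 ≤ (r:ℝ)^2 * T4 := by positivity
          split_ifs <;> positivity
      _ = _ := by
          rw [sum_add_distrib, sum_add_distrib]
          have s1 : ∑ z : (Fin n × Fin n) × (Fin n × Fin n), (if z.1.1 = z.2.1 then T3 else 0) = n^3 * T3 := by
            exact sum_aux1 n T3
          have s2 : ∑ z : (Fin n × Fin n) × (Fin n × Fin n), (if z.1.2 = z.2.2 then T3 else 0) = n^3 * T3 := by
            exact sum_aux2 n T3
          rw [s1, s2, sum_const, card_univ]
          simp
          ring
  have hfin := sum_le_sum (s := univ) fun σ _ => hXY σ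
  rw [sum_sub_distrib] at hfin
  have : F * ((n:ℝ)^2 / 9 * (q / 8) ^ r - (2 * n^3 * (2 ^ (3 * r) * q ^ (2 * r)) +
      n^4 * (r^2 * (2 ^ (4 * r) * q ^ (2 * r + 1))))) = F * ((n:ℝ)^2 / 9 * (q / 8) ^ r) - (2 * n^3 * T3 + n^4 * (r^2 * T4)) := by
    rw [hT3d, hT4d]; ring
  rw [this]
  linarith

theorem det_bound (n r : ℕ) (hr : 2 ≤ r) (x q : ℝ) (hx : x ^ (r + 1) = n) (hx1 : 1 ≤ x)
    (hq1 : q ≤ 1 / 4608 / (r * x ^ 2)) (hq2 : 1 / 9216 / (r * x ^ 2) ≤ q) :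
    1 / 18 * (1 / 73728 / r) ^ r * x ^ 2 ≤ (n:ℝ)^2 / 9 * (q / 8) ^ r - (2 * n^3 * (2 ^ (3 * r) * q ^ (2 * r)) +
      n^4 * (r^2 * (2 ^ (4 * r) * q ^ (2 * r + 1)))) := by
  have hr0 : (2:ℝ) ≤ r := by exact_mod_cast hr
  have hx0 : 0 < x := by linarith
  have hrp : (0:ℝ) < r := by linarith
  have hq0 : 0 ≤ q := le_trans (by positivity) hq2
  have hxn : (n:ℝ) = x ^ (r + 1) := hx.symm
  have a1 : (n:ℝ) * q ^ r * (72 * 64 ^ r) ≤ 1 := by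
    have h1 : q ≤ 1 / 4608 / x ^ 2 := by
      refine hq1.trans ?_
      gcongr
      nlinarith [sq_nonneg x]
    have h2 : x ^ (r + 1) ≤ (x ^ 2) ^ r := by
      rw [← pow_mul]
      exact pow_le_pow_right₀ hx1 (by omega)
    have h3 : q ^ r ≤ (1 / 4608 / x ^ 2) ^ r := pow_le_pow_left₀ hq0 h1 r
    have h4 : (72:ℝ) ≤ 72 ^ r := le_self_pow₀ (by norm_num) (by omega)
    calc (n:ℝ) * q ^ r * (72 * 64 ^ r) ≤ (x ^ 2) ^ r * (1 / 4608 / x ^ 2) ^ r * (72 ^ r * 64 ^ r) := by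
          rw [hxn]; gcongr
      _ = (x ^ 2 * (1 / 4608 / x ^ 2) * (72 * 64)) ^ r := by rw [← mul_pow, ← mul_pow, ← mul_pow]
      _ = 1 := by
        have : x ^ 2 * (1 / 4608 / x ^ 2) * (72 * 64) = 1 := by field_simp; norm_num
        rw [this, one_pow]
  have a2 : (n:ℝ)^2 * q ^ (r + 1) * (36 * r^2 * 128 ^ r) ≤ 1 := by
    have h3 : q ^ (r + 1) ≤ (1 / 4608 / (r * x ^ 2)) ^ (r + 1) := pow_le_pow_left₀ hq0 hq1 _
    have h4 : (36:ℝ) ≤ 36 ^ (r + 1) := le_self_pow₀ (by norm_num) (by omega)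
    have h5 : (r:ℝ)^2 ≤ r ^ (r + 1) := pow_le_pow_right₀ (by linarith) (by omega)
    have h6 : (128:ℝ)^r ≤ 128 ^ (r + 1) := pow_le_pow_right₀ (by norm_num) (by omega)
    calc (n:ℝ)^2 * q ^ (r + 1) * (36 * r^2 * 128 ^ r)
        ≤ (x ^ 2) ^ (r + 1) * (1 / 4608 / (r * x ^ 2)) ^ (r + 1) * (36 ^ (r + 1) * r ^ (r + 1) * 128 ^ (r + 1)) := by
          rw [hxn, ← pow_mul, mul_comm (r + 1) 2, pow_mul]; gcongr
      _ = (x ^ 2 * (1 / 4608 / (r * x ^ 2)) * (36 * r * 128)) ^ (r + 1) := by rw [← mul_pow, ← mul_pow, ← mul_pow, ← mul_pow]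
      _ = 1 := by
        have : x ^ 2 * (1 / 4608 / (r * x ^ 2)) * (36 * r * 128) = 1 := by field_simp; norm_num
        rw [this, one_pow]
  have hqr : 0 ≤ (n:ℝ)^2 / 36 * (q / 8) ^ r := by positivity
  have b1 : 2 * (n:ℝ)^3 * (2 ^ (3 * r) * q ^ (2 * r)) ≤ (n:ℝ)^2 / 36 * (q / 8) ^ r := by
    have e8 : (64:ℝ)^r = 8 ^ r * 8 ^ r := by rw [← mul_pow]; norm_num
    calc 2 * (n:ℝ)^3 * (2 ^ (3 * r) * q ^ (2 * r)) = (n:ℝ)^2 / 36 * (q / 8) ^ r * ((n:ℝ) * q ^ r * (72 * 64 ^ r)) := by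
          rw [e8, div_pow, pow_mul 2 3 r, mul_comm 2 r, pow_mul q r 2]
          norm_num
          field_simp
          ring
      _ ≤ _ := mul_le_of_le_one_right hqr a1
  have b2 : (n:ℝ)^4 * (r^2 * (2 ^ (4 * r) * q ^ (2 * r + 1))) ≤ (n:ℝ)^2 / 36 * (q / 8) ^ r := by
    have e8 : (128:ℝ)^r = 16 ^ r * 8 ^ r := by rw [← mul_pow]; norm_num
    calc (n:ℝ)^4 * (r^2 * (2 ^ (4 * r) * q ^ (2 * r + 1)))
          = (n:ℝ)^2 / 36 * (q / 8) ^ r * ((n:ℝ)^2 * q ^ (r + 1) * (36 * r^2 * 128 ^ r)) := by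
          rw [e8, div_pow, pow_mul 2 4 r, mul_comm 2 r, pow_succ q (r * 2), pow_mul q r 2, pow_succ q r]
          norm_num
          field_simp
      _ ≤ _ := mul_le_of_le_one_right hqr a2
  have b3 : (1 / 73728 / r) ^ r * x ^ 2 ≤ (n:ℝ)^2 * (q / 8) ^ r := by
    have h1 : 1 / 73728 / (r * x ^ 2) ≤ q / 8 := by
      have : 1 / 73728 / (r * x ^ 2) = 1 / 9216 / (r * x ^ 2) / 8 := by ring
      rw [this]; gcongr
    calc (1 / 73728 / r) ^ r * x ^ 2 = (n:ℝ)^2 * (1 / 73728 / (r * x ^ 2)) ^ r := by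
          rw [hxn, ← div_div, div_pow _ (x ^ 2), ← pow_mul, ← pow_mul]
          rw [show (r + 1) * 2 = 2 * r + 2 by ring, pow_add]
          field_simp
      _ ≤ _ := by gcongr
  linarith

theorem key_bound (n r : ℕ) (hr : 2 ≤ r) (x : ℝ) (hx : x ^ (r + 1) = n) (hx1 : 9216 ≤ x) (c : ℝ)
    (hc : c = 1 / 18 * (1 / 73728 / r) ^ r) :
    (1:ℝ) - 4 * (4 * r * (2 + Real.log (n * r : ℕ))) / (c * x ^ 2) ≤
      (Nat.card {σ : Perm (Fin (n * r)) | ∃ k : ℕ, c / 2 * x ^ 2 ≤ (k:ℝ) ∧ HasTwins (mat σ) k} : ℝ) / (n * r).factorial := by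
  classical
  have hr0 : (2:ℝ) ≤ r := by exact_mod_cast hr
  have hrp : (0:ℝ) < r := by linarith
  have hx0 : 0 < x := by linarith
  have hxr : x ≤ x ^ (r - 1) := le_self_pow₀ (by linarith) (by omega)
  have hxn : x ^ (r + 1) = x ^ (r - 1) * x ^ 2 := by rw [← pow_add]; congr 1; omega
  have hxnn : x ^ (r - 1) ≤ n := by
    rw [← hx]; exact pow_le_pow_right₀ (by linarith) (by omega)
  have hn8 : 8 ≤ n := by
    have : (8:ℝ) ≤ n := by linarith
    exact_mod_cast this
  have hn0 : (0:ℝ) < n := by linarith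
  obtain ⟨L, hLd⟩ : ∃ L : ℕ, L = ⌊1 / 4608 * x ^ (r - 1)⌋₊ := ⟨_, rfl⟩
  have hL2 : 2 ≤ L := by
    rw [hLd]; apply Nat.le_floor; push_cast; linarith
  have hLu : (L:ℝ) ≤ 1 / 4608 * x ^ (r - 1) := by
    rw [hLd]; exact Nat.floor_le (by positivity)
  have hLl : 1 / 9216 * x ^ (r - 1) ≤ (L:ℝ) := by
    have := Nat.lt_floor_add_one (1 / 4608 * x ^ (r - 1))
    rw [← hLd] at this
    linarith
  have hm : 2 * r ≤ n * r / L := by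
    rw [Nat.le_div_iff_mul_le (by omega)]
    have : (2 * L : ℝ) ≤ n := by linarith
    have h2 : 2 * L ≤ n := by exact_mod_cast this
    nlinarith
  obtain ⟨ν, h1, h2, h3⟩ := nu_exists n r L (by omega)
  have hE := expect_bound n r L (by omega) hn8 hL2 hm ν h2 _ rfl
  have hq1 : (L:ℝ) / (n * r : ℕ) ≤ 1 / 4608 / (r * x ^ 2) := by
    push_cast
    rw [← hx, hxn, div_le_div_iff₀ (by positivity) (by positivity)]
    calc (L:ℝ) * (r * x ^ 2) ≤ (1 / 4608 * x ^ (r - 1)) * (r * x ^ 2) := by gcongr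
      _ = _ := by ring
  have hq2 : 1 / 9216 / (r * x ^ 2) ≤ (L:ℝ) / (n * r : ℕ) := by
    push_cast
    rw [← hx, hxn, div_le_div_iff₀ (by positivity) (by positivity)]
    calc 1 / 9216 * (x ^ (r - 1) * x ^ 2 * (r:ℝ)) = (1 / 9216 * x ^ (r - 1)) * (r * x ^ 2) := by ring
      _ ≤ _ := by gcongr
  have hD := det_bound n r hr x _ hx (by linarith) hq1 hq2
  rw [← hc] at hD
  have hc0 : 0 < c := by rw [hc]; positivity
  have hcard : (Fintype.card (Perm (Fin (n * r))) : ℝ) = (n * r).factorial := by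
    rw [Fintype.card_perm, Fintype.card_fin]
  have hF : (0:ℝ) < (n * r).factorial := by exact_mod_cast Nat.factorial_pos _
  have hlog : 0 ≤ Real.log (n * r : ℕ) := Real.log_natCast_nonneg _
  have hch := cheb (fun σ => (ν σ : ℝ)) (c * x ^ 2) (4 * r * (2 + Real.log (n * r : ℕ))) (by positivity)
    (by rw [hcard]; exact le_trans (by gcongr) hE) (by rw [hcard]; exact h3) (by positivity)
  rw [hcard] at hch
  have hsplit : ((n * r).factorial : ℝ) ≤ (Nat.card {σ : Perm (Fin (n * r)) | ∃ k : ℕ, c / 2 * x ^ 2 ≤ (k:ℝ) ∧ HasTwins (mat σ) k} : ℝ)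
      + (Nat.card {σ : Perm (Fin (n * r)) | ¬ c * x ^ 2 / 2 ≤ (ν σ : ℝ)} : ℝ) := by
    rw [← hcard]
    have hu : (Set.univ : Set (Perm (Fin (n * r)))) ⊆ {σ | ∃ k : ℕ, c / 2 * x ^ 2 ≤ (k:ℝ) ∧ HasTwins (mat σ) k} ∪
        {σ | ¬ c * x ^ 2 / 2 ≤ (ν σ : ℝ)} := by
      intro σ _
      by_cases h : c * x ^ 2 / 2 ≤ (ν σ : ℝ)
      · left
        exact ⟨ν σ, by linarith, h1 σ⟩
      · right; exact h
    have h4 := (Set.ncard_le_ncard hu (Set.toFinite _)).trans (Set.ncard_union_le _ _)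
    rw [Set.ncard_univ, Nat.card_eq_fintype_card] at h4
    exact_mod_cast h4
  rw [le_div_iff₀ hF]
  linarith

theorem lim_aux (r : ℕ) (hr : 2 ≤ r) (c : ℝ) :
    Filter.Tendsto (fun n : ℕ => (1:ℝ) - 4 * (4 * r * (2 + Real.log (n * r : ℕ))) / (c * ((n:ℝ) ^ ((2:ℝ) / ((r:ℝ) + 1)))))
      Filter.atTop (nhds 1) := by
  have hs : (0:ℝ) < 2 / ((r:ℝ) + 1) := by positivity
  have hrp : (0:ℝ) < r := by exact_mod_cast (by omega : 0 < r)
  have t1 : Filter.Tendsto (fun y : ℝ => Real.log y / y ^ ((2:ℝ) / ((r:ℝ) + 1))) Filter.atTop (nhds 0) :=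
    (isLittleO_log_rpow_atTop hs).tendsto_div_nhds_zero
  have t2 : Filter.Tendsto (fun y : ℝ => (y ^ ((2:ℝ) / ((r:ℝ) + 1)))⁻¹) Filter.atTop (nhds 0) :=
    (tendsto_rpow_atTop hs).inv_tendsto_atTop
  have t1' := t1.comp (tendsto_natCast_atTop_atTop (R := ℝ))
  have t2' := t2.comp (tendsto_natCast_atTop_atTop (R := ℝ))
  have t3 := ((t2'.const_mul (16 * r * (2 + Real.log r) / c)).add (t1'.const_mul (16 * r / c))).const_sub 1
  simp only [mul_zero, add_zero, sub_zero] at t3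
  refine t3.congr' ?_
  filter_upwards [Filter.eventually_gt_atTop 0] with n hn
  have hn0 : (n:ℝ) ≠ 0 := by exact_mod_cast hn.ne'
  simp only [Function.comp]
  push_cast
  rw [Real.log_mul hn0 hrp.ne']
  rw [← div_div, div_eq_mul_inv _ ((n:ℝ) ^ ((2:ℝ) / ((r:ℝ) + 1))), div_eq_mul_inv _ ((n:ℝ) ^ ((2:ℝ) / ((r:ℝ) + 1)))]
  ring

end Helpers

/-- lower bound in Theorem 1.1, `thm:random`.
For every `r ≥ 2` there is `c = c(r) > 0` such that the proportion of ordered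
`r`-matchings of size `n` containing twins of size at least `c · n^{2/(r+1)}`
tends to `1`. -/
theorem random_lower_bound (r : ℕ) (hr : 2 ≤ r) :
    ∃ c : ℝ, 0 < c ∧ Filter.Tendsto (fun n : ℕ =>
      (Nat.card {M : Finset (Finset ℕ) | IsOrderedMatching r n M ∧
          ∃ k : ℕ, c * (n : ℝ) ^ ((2 : ℝ) / ((r : ℝ) + 1)) ≤ (k : ℝ) ∧ HasTwins M k} : ℝ) /
        (Nat.card {M : Finset (Finset ℕ) | IsOrderedMatching r n M} : ℝ))
      Filter.atTop (nhds 1) := by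
  have hrp : (0:ℝ) < r := by exact_mod_cast (by omega : 0 < r)
  obtain ⟨c, hc⟩ : ∃ c : ℝ, c = 1 / 18 * (1 / 73728 / r) ^ r := ⟨_, rfl⟩
  have hc0 : 0 < c := by rw [hc]; positivity
  refine ⟨c / 2, by positivity, ?_⟩
  refine tendsto_of_tendsto_of_tendsto_of_le_of_le' (lim_aux r hr c) tendsto_const_nhds ?_ ?_
  · have hev : Filter.Tendsto (fun n : ℕ => (n:ℝ) ^ ((1:ℝ) / ((r:ℝ) + 1))) Filter.atTop Filter.atTop :=
      (tendsto_rpow_atTop (by positivity)).comp (tendsto_natCast_atTop_atTop (R := ℝ))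
    filter_upwards [hev.eventually_ge_atTop 9216] with n hn
    have hx : ((n:ℝ) ^ ((1:ℝ) / ((r:ℝ) + 1))) ^ (r + 1) = n := by
      rw [← Real.rpow_natCast, ← Real.rpow_mul (by positivity)]
      push_cast
      rw [one_div_mul_cancel (by positivity), Real.rpow_one]
    have hx2 : ((n:ℝ) ^ ((1:ℝ) / ((r:ℝ) + 1))) ^ 2 = (n:ℝ) ^ ((2:ℝ) / ((r:ℝ) + 1)) := by
      rw [← Real.rpow_natCast, ← Real.rpow_mul (by positivity)]
      congr 1
      push_cast
      ring
    have h := key_bound n r hr _ hx hn c hc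
    rw [hx2] at h
    rw [ratio_eq (by omega) (fun M => ∃ k : ℕ, c / 2 * (n : ℝ) ^ ((2 : ℝ) / ((r : ℝ) + 1)) ≤ (k : ℝ) ∧ HasTwins M k)]
    exact h
  · refine Filter.Eventually.of_forall fun n => ?_
    rw [ratio_eq (by omega) (fun M => ∃ k : ℕ, c / 2 * (n : ℝ) ^ ((2 : ℝ) / ((r : ℝ) + 1)) ≤ (k : ℝ) ∧ HasTwins M k)]
    have hF : (0:ℝ) < (n * r).factorial := by exact_mod_cast Nat.factorial_pos _
    rw [div_le_one hF]
    have h := Set.ncard_le_ncard (Set.subset_univ {σ : Equiv.Perm (Fin (n * r)) | ∃ k : ℕ,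
      c / 2 * (n : ℝ) ^ ((2 : ℝ) / ((r : ℝ) + 1)) ≤ (k : ℝ) ∧ HasTwins (mat σ) k}) (Set.toFinite _)
    rw [Set.ncard_univ, Nat.card_eq_fintype_card, Fintype.card_perm, Fintype.card_fin] at h
    exact_mod_cast h
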